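/- There exist absolute constants c > 0 and C such that for every finite set A ⊆ R and each choice of sign ε ∈ {+1, −1}: #{(a,b,d,a',b',d') ∈ A⁶ : a·(b + ε·d) = a'·(b' + ε·d')} ≤ C·|A|^(9/2 − c), and #{(a,b,d,a',b',d') ∈ A⁶ : a·b + ε·d = a'·b' + ε·d'} ≤ C·|A|^(9/2 − c). -/

import Mathlib

section Helpers

open Finset
open scoped Classical


lemma cube_le_sum (m : ℕ) : (m:ℝ)^3 ≤ ∑ t ∈ Finset.Icc 1 m, 3*(t:ℝ)^2 := by
  induction m with
  | zero => simp
  | succ k ih =>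
    rw [Finset.sum_Icc_succ_top (by omega)]
    push_cast
    have : (0:ℝ) ≤ k := by positivity
    nlinarith

lemma layer_cake {ι : Type*} (s : Finset ι) (f : ι → ℕ) (n : ℕ) (M : ℝ)
    (hf : ∀ i ∈ s, f i ≤ n)
    (h : ∀ t : ℕ, 1 ≤ t → ((s.filter (fun i => t ≤ f i)).card : ℝ) * (t:ℝ)^3 ≤ M) :
    ∑ i ∈ s, (f i : ℝ)^3 ≤ 3 * M * (1 + Real.log n) := by
  have hM : 0 ≤ M := le_trans (by positivity) (h 1 le_rfl)
  calc ∑ i ∈ s, (f i : ℝ)^3 ≤ ∑ i ∈ s, ∑ t ∈ Finset.Icc 1 n, (if t ≤ f i then 3*(t:ℝ)^2 else 0) := by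
        apply Finset.sum_le_sum
        intro i hi
        refine (cube_le_sum (f i)).trans ?_
        rw [← Finset.sum_filter]
        apply le_of_eq
        apply Finset.sum_congr _ (fun _ _ => rfl)
        ext t
        have := hf i hi
        simp only [Finset.mem_Icc, Finset.mem_filter]
        omega
    _ = ∑ t ∈ Finset.Icc 1 n, ((s.filter (fun i => t ≤ f i)).card : ℝ) * (3*(t:ℝ)^2) := by
        rw [Finset.sum_comm]
        apply Finset.sum_congr rfl
        intro t _
        rw [← Finset.sum_filter, Finset.sum_const, nsmul_eq_mul]
    _ ≤ ∑ t ∈ Finset.Icc 1 n, 3 * M * ((t:ℝ)⁻¹) := by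
        apply Finset.sum_le_sum
        intro t ht
        have ht1 : 1 ≤ t := (Finset.mem_Icc.mp ht).1
        have ht0 : (0:ℝ) < t := by exact_mod_cast ht1
        have := h t ht1
        rw [← div_eq_mul_inv, le_div_iff₀ ht0]
        nlinarith
    _ = 3 * M * ((harmonic n : ℚ) : ℝ) := by
        rw [← Finset.mul_sum, harmonic_eq_sum_Icc]
        push_cast
        rfl
    _ ≤ 3 * M * (1 + Real.log n) := by
        apply mul_le_mul_of_nonneg_left (harmonic_le_one_add_log n) (by positivity)

/-- richness -/
noncomputable def rich {G Ω : Type*} [SMul G Ω] (U V : Finset Ω) (g : G) : ℕ :=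
  (U.filter (fun u => g • u ∈ V)).card

/-- affine maps -/
@[ext] structure Aff where
  a : ℝˣ
  b : ℝ

namespace Aff
noncomputable instance : Mul Aff := ⟨fun g h => ⟨g.a * h.a, g.a * h.b + g.b⟩⟩
noncomputable instance : One Aff := ⟨⟨1, 0⟩⟩
noncomputable instance : Inv Aff := ⟨fun g => ⟨g.a⁻¹, -((g.a⁻¹ : ℝˣ) * g.b)⟩⟩
@[simp] lemma mul_a (g h : Aff) : (g * h).a = g.a * h.a := rfl
@[simp] lemma mul_b (g h : Aff) : (g * h).b = g.a * h.b + g.b := rfl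
@[simp] lemma one_a : (1 : Aff).a = 1 := rfl
@[simp] lemma one_b : (1 : Aff).b = 0 := rfl
@[simp] lemma inv_a (g : Aff) : (g⁻¹).a = g.a⁻¹ := rfl
@[simp] lemma inv_b (g : Aff) : (g⁻¹).b = -((g.a⁻¹ : ℝˣ) * g.b) := rfl
noncomputable instance : Group Aff :=
  Group.ofLeftAxioms
    (by intro x y z; ext <;> simp [mul_assoc, mul_add, add_assoc])
    (by intro x; ext <;> simp)
    (by intro x; ext <;> simp)
noncomputable instance : MulAction Aff ℝ where
  smul g x := g.a * x + g.b
  one_smul x := by show ((1:Aff).a : ℝ) * x + (1:Aff).b = x; simp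
  mul_smul g h x := by
    show ((g*h).a : ℝ) * x + (g*h).b = g.a * (h.a * x + h.b) + g.b
    simp; ring
lemma smul_def (g : Aff) (x : ℝ) : g • x = g.a * x + g.b := rfl
end Aff

/-- rank-based block index -/
noncomputable def blk (U : Finset ℝ) (q : ℕ) (u : ℝ) : ℕ := (U.filter (· < u)).card / q

lemma blk_mono (U : Finset ℝ) (q : ℕ) {u v : ℝ} (h : u ≤ v) : blk U q u ≤ blk U q v := by
  apply Nat.div_le_div_right
  apply Finset.card_le_card
  intro x hx
  simp only [Finset.mem_filter] at hx ⊢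
  exact ⟨hx.1, lt_of_lt_of_le hx.2 h⟩

lemma rank_lt (U : Finset ℝ) {u : ℝ} (hu : u ∈ U) : (U.filter (· < u)).card < U.card := by
  apply Finset.card_lt_card
  rw [Finset.filter_ssubset]
  exact ⟨u, hu, lt_irrefl u⟩

lemma rank_injOn (U : Finset ℝ) : Set.InjOn (fun u => (U.filter (· < u)).card) U := by
  have key : ∀ u ∈ U, ∀ v, u < v → (U.filter (· < u)).card < (U.filter (· < v)).card := by
    intro u hu v huv
    apply Finset.card_lt_card
    refine ⟨?_, ?_⟩
    · intro x hx
      simp only [Finset.mem_filter] at hx ⊢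
      exact ⟨hx.1, hx.2.trans huv⟩
    · intro hh
      have : u ∈ U.filter (· < u) := hh (by simp [hu, huv])
      simp at this
  intro u hu v hv huv
  rcases lt_trichotomy u v with h | h | h
  · have := key u hu v h; simp only at huv; omega
  · exact h
  · have := key v hv u h; simp only at huv; omega

lemma blk_lt (U : Finset ℝ) (r : ℕ) (hr : 1 ≤ r) {u : ℝ} (hu : u ∈ U) :
    blk U (U.card / r + 1) u < r := by
  unfold blk
  rw [Nat.div_lt_iff_lt_mul (Nat.succ_pos _)]
  refine (rank_lt U hu).trans_le ?_
  have := Nat.lt_mul_div_succ U.card (show 0 < r by omega)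
  exact this.le

lemma blk_fiber (U : Finset ℝ) (q : ℕ) (hq : 0 < q) (j : ℕ) :
    (U.filter (fun u => blk U q u = j)).card ≤ q := by
  have : (U.filter (fun u => blk U q u = j)).card ≤ (Finset.Ico (j*q) (j*q+q)).card := by
    apply Finset.card_le_card_of_injOn (fun u => (U.filter (· < u)).card)
    · intro u hu
      rw [Finset.mem_coe, Finset.mem_filter] at hu
      unfold blk at hu
      have := (Nat.div_eq_iff hq).mp hu.2
      simp only [Finset.coe_Ico, Set.mem_Ico]
      omega
    · exact (rank_injOn U).mono (by intro x hx; simp at hx ⊢; exact hx.1)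
  simpa using this

lemma q_le (m r : ℕ) (hr : 1 ≤ r) (h : r ≤ m) : ((m / r + 1 : ℕ) : ℝ) ≤ 2 * m / r := by
  have hr0 : (0:ℝ) < r := by exact_mod_cast hr
  have h1 : ((m / r : ℕ) : ℝ) ≤ (m:ℝ) / r := Nat.cast_div_le
  have h2 : (1:ℝ) ≤ (m:ℝ)/r := by rw [le_div_iff₀ hr0]; simpa using (show (r:ℝ) ≤ m by exact_mod_cast h)
  push_cast
  rw [mul_div_assoc]; linarith

/-- fibre size -/
noncomputable def fib {ι κ : Type*} (s : Finset ι) (f : ι → κ) (k : κ) : ℕ :=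
  (s.filter (fun x => f x = k)).card

/-- energy -/
noncomputable def en {ι κ : Type*} (s : Finset ι) (f : ι → κ) : ℕ :=
  ((s ×ˢ s).filter (fun p => f p.1 = f p.2)).card

lemma sum_fib {ι κ : Type*} (s : Finset ι) (f : ι → κ) :
    ∑ k ∈ s.image f, fib s f k = s.card :=
  (Finset.card_eq_sum_card_image f s).symm

lemma sum_fib_mul {ι κ : Type*} (s : Finset ι) (f : ι → κ) (g : κ → ℝ) :
    ∑ k ∈ s.image f, (fib s f k : ℝ) * g k = ∑ x ∈ s, g (f x) := by
  rw [Finset.sum_comp g f]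
  simp only [nsmul_eq_mul, fib]

lemma en_eq_sum {ι κ : Type*} (s : Finset ι) (f : ι → κ) :
    en s f = ∑ x ∈ s, fib s f (f x) := by
  unfold en fib
  rw [Finset.card_filter, Finset.sum_product]
  apply Finset.sum_congr rfl
  intro x _
  rw [Finset.card_filter]
  simp only [eq_comm]

lemma en_eq {ι κ : Type*} (s : Finset ι) (f : ι → κ) :
    (en s f : ℝ) = ∑ k ∈ s.image f, (fib s f k : ℝ)^2 := by
  rw [en_eq_sum]
  push_cast
  rw [← sum_fib_mul s f (fun k => (fib s f k : ℝ))]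
  simp only [sq]

lemma en_le {ι κ : Type*} (s : Finset ι) (f : ι → κ) (q : ℕ) (h : ∀ k, fib s f k ≤ q) :
    en s f ≤ s.card * q := by
  rw [en_eq_sum, ← smul_eq_mul]
  exact Finset.sum_le_card_nsmul _ _ _ (fun x _ => h _)

lemma card_sq_le_en {ι κ : Type*} (s : Finset ι) (f : ι → κ) :
    (s.card : ℝ)^2 ≤ (s.image f).card * (en s f : ℝ) := by
  rw [en_eq, ← sum_fib s f]
  push_cast
  exact sq_sum_le_card_mul_sum_sq

lemma card_sq_le_en_nat {ι κ : Type*} (s : Finset ι) (f : ι → κ) :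
    s.card^2 ≤ (s.image f).card * en s f := by
  exact_mod_cast card_sq_le_en s f

lemma stair_card (S : Finset ℝ) (φ χ : ℝ → ℕ) (r : ℕ) (hr : 1 ≤ r)
    (hφ : ∀ u ∈ S, φ u < r) (hχ : ∀ u ∈ S, χ u < r) (mφ : Monotone φ)
    (mχ : (∀ u ∈ S, ∀ v ∈ S, u ≤ v → χ u ≤ χ v) ∨ (∀ u ∈ S, ∀ v ∈ S, u ≤ v → χ v ≤ χ u)) :
    (S.image (fun u => (φ u, χ u))).card ≤ 2*r - 1 := by
  rcases mχ with m | m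
  · rw [← Finset.card_range (2*r-1)]
    apply Finset.card_le_card_of_injOn (fun p => p.1 + p.2)
    · intro p hp
      simp only [Finset.coe_image, Set.mem_image, Finset.mem_coe] at hp
      obtain ⟨u, hu, rfl⟩ := hp
      have := hφ u hu; have := hχ u hu
      simp; omega
    · intro p hp p' hp' he
      simp only [Finset.coe_image, Set.mem_image, Finset.mem_coe] at hp hp'
      obtain ⟨u, hu, rfl⟩ := hp
      obtain ⟨v, hv, rfl⟩ := hp'
      simp only at he
      rcases le_total u v with h | h
      · have := mφ h; have := m u hu v hv h
        ext <;> simp <;> omega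
      · have := mφ h; have := m v hv u hu h
        ext <;> simp <;> omega
  · rw [← Finset.card_range (2*r-1)]
    apply Finset.card_le_card_of_injOn (fun p => p.1 + (r - 1 - p.2))
    · intro p hp
      simp only [Finset.coe_image, Set.mem_image, Finset.mem_coe] at hp
      obtain ⟨u, hu, rfl⟩ := hp
      have := hφ u hu; have := hχ u hu
      simp; omega
    · intro p hp p' hp' he
      simp only [Finset.coe_image, Set.mem_image, Finset.mem_coe] at hp hp'
      obtain ⟨u, hu, rfl⟩ := hp
      obtain ⟨v, hv, rfl⟩ := hp'
      simp only at he
      have := hχ u hu; have := hχ v hv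
      rcases le_total u v with h | h
      · have := mφ h; have := m u hu v hv h
        ext <;> simp <;> omega
      · have := mφ h; have := m v hv u hu h
        ext <;> simp <;> omega

lemma en_offdiag {ι κ : Type*} (s : Finset ι) (f : ι → κ) :
    en s f = s.card + ((s ×ˢ s).filter (fun p => p.1 ≠ p.2 ∧ f p.1 = f p.2)).card := by
  unfold en
  rw [← Finset.card_filter_add_card_filter_not (s := (s ×ˢ s).filter (fun p => f p.1 = f p.2)) (fun p => p.1 = p.2)]
  rw [Finset.filter_filter, Finset.filter_filter]
  congr 1
  · rw [← Finset.diag_card s]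
    congr 1
    ext ⟨x, y⟩
    simp only [Finset.mem_filter, Finset.mem_product, Finset.mem_diag]
    constructor
    · rintro ⟨⟨h, _⟩, _, h'⟩; exact ⟨h, h'⟩
    · rintro ⟨h, rfl⟩; exact ⟨⟨h, h⟩, rfl, rfl⟩
  · congr 1
    ext x
    simp only [Finset.mem_filter]
    tauto

lemma rich_le_left {G Ω : Type*} [SMul G Ω] (U V : Finset Ω) (g : G) : rich U V g ≤ U.card :=
  Finset.card_filter_le _ _

lemma rich_le_right {G Ω : Type*} [Group G] [MulAction G Ω] (U V : Finset Ω) (g : G) :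
    rich U V g ≤ V.card := by
  apply Finset.card_le_card_of_injOn (fun u => g • u)
  · intro u hu
    simp only [Finset.mem_coe, Finset.mem_filter] at hu
    exact hu.2
  · exact (MulAction.injective g).injOn

lemma st_basic (U V : Finset ℝ) (H : Finset Aff) (t : ℕ) (ht : 2 ≤ t) :
    ((H.filter (fun h => t ≤ rich U V h)).card : ℝ) * (t:ℝ)^3 ≤ 256 * (U.card:ℝ)^2 * (V.card:ℝ)^2 := by
  set H' := H.filter (fun h => t ≤ rich U V h) with hH'
  rcases Finset.eq_empty_or_nonempty H' with he | ⟨h0, hh0⟩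
  · rw [he]; simp; positivity
  have hrich0 : t ≤ rich U V h0 := (Finset.mem_filter.mp hh0).2
  set r := (t+2)/4 with hrdef
  have hr1 : 1 ≤ r := by omega
  have hrt : r ≤ t := by omega
  have hrU : r ≤ U.card := hrt.trans (hrich0.trans (rich_le_left _ _ _))
  have hrV : r ≤ V.card := hrt.trans (hrich0.trans (rich_le_right _ _ _))
  set q₁ := U.card / r + 1 with hq₁
  set q₂ := V.card / r + 1 with hq₂
  set φ := blk U q₁
  set ψ := blk V q₂
  let T : Aff → Finset (ℝ × ℝ) := fun h =>
    ((U.filter (fun u => h • u ∈ V)) ×ˢ (U.filter (fun u => h • u ∈ V))).filter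
      (fun p => p.1 ≠ p.2 ∧ (φ p.1, ψ (h • p.1)) = (φ p.2, ψ (h • p.2)))
  have hT : ∀ h ∈ H', t ≤ (T h).card := by
    intro h hh
    have hk : t ≤ rich U V h := (Finset.mem_filter.mp hh).2
    set S := U.filter (fun u => h • u ∈ V) with hS
    have hk' : t ≤ S.card := hk
    have hst : (S.image (fun u => (φ u, ψ (h • u)))).card ≤ 2*r - 1 := by
      apply stair_card S φ (fun u => ψ (h • u)) r hr1
      · intro u hu; exact blk_lt U r hr1 (Finset.mem_filter.mp hu).1
      · intro u hu; exact blk_lt V r hr1 (Finset.mem_filter.mp hu).2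
      · intro u v huv; exact blk_mono U q₁ huv
      · rcases le_total 0 (h.a : ℝ) with ha | ha
        · left
          intro u _ v _ huv
          apply blk_mono
          rw [Aff.smul_def, Aff.smul_def]
          nlinarith
        · right
          intro u _ v _ huv
          apply blk_mono
          rw [Aff.smul_def, Aff.smul_def]
          nlinarith
    have h1 := card_sq_le_en_nat S (fun u => (φ u, ψ (h • u)))
    rw [en_offdiag] at h1
    have h1' : S.card^2 ≤ (S.image (fun u => (φ u, ψ (h • u)))).card * (S.card + (T h).card) := by
      convert h1
    have h2 : S.card^2 ≤ (2*r-1) * (S.card + (T h).card) := h1'.trans (Nat.mul_le_mul_right _ hst)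
    by_contra hlt
    push Not at hlt
    have h3 : (2*r-1) * (S.card + (T h).card) < (2*r-1) * (2 * S.card) := by
      apply Nat.mul_lt_mul_of_pos_left _ (by omega)
      omega
    have h4 : (2*r-1)*(2*S.card) ≤ S.card * S.card := by
      have : (2*r-1)*2 ≤ S.card := by omega
      nlinarith
    nlinarith
  have hcount : H'.card * t ≤ en U φ * en V ψ := by
    calc H'.card * t ≤ ∑ h ∈ H', (T h).card := by
          rw [← smul_eq_mul]; exact Finset.card_nsmul_le_sum _ _ _ hT
      _ = (H'.sigma T).card := (Finset.card_sigma _ _).symm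
      _ ≤ (((U ×ˢ U).filter (fun p => φ p.1 = φ p.2)) ×ˢ
            ((V ×ˢ V).filter (fun p => ψ p.1 = ψ p.2))).card := by
          apply Finset.card_le_card_of_injOn
            (fun x => (x.2, (x.1 • x.2.1, x.1 • x.2.2)))
          · rintro ⟨h, p⟩ hx
            simp only [Finset.mem_coe, Finset.mem_sigma, T, Finset.mem_filter, Finset.mem_product, Prod.mk.injEq] at hx ⊢
            tauto
          · rintro ⟨h, u, u'⟩ hx ⟨h', v, v'⟩ hx' he
            simp only [Prod.mk.injEq, Aff.smul_def] at he
            simp only [Finset.mem_coe, Finset.mem_sigma, T, Finset.mem_filter, ne_eq] at hx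
            have hne : u ≠ u' := hx.2.2.1
            obtain ⟨⟨rfl, rfl⟩, e1, e2⟩ := he
            have hne' : u - u' ≠ 0 := sub_ne_zero.mpr hne
            have ha : (h.a : ℝ) = h'.a := by
              have : ((h.a : ℝ) - h'.a) * (u - u') = 0 := by linarith
              rcases mul_eq_zero.mp this with h | h
              · linarith
              · exact absurd h hne'
            have hb : h.b = h'.b := by rw [ha] at e1; linarith
            have : h = h' := Aff.ext (Units.ext ha) hb
            rw [this]
      _ = en U φ * en V ψ := by
          rw [Finset.card_product]; unfold en; congr!
  have hU : en U φ ≤ U.card * q₁ := en_le _ _ _ (fun k => by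
    have := blk_fiber U q₁ (Nat.succ_pos _) k
    unfold fib; convert this)
  have hV : en V ψ ≤ V.card * q₂ := en_le _ _ _ (fun k => by
    have := blk_fiber V q₂ (Nat.succ_pos _) k
    unfold fib; convert this)
  have hcR : (H'.card : ℝ) * t ≤ ((U.card : ℝ) * q₁) * ((V.card:ℝ) * q₂) := by
    exact_mod_cast hcount.trans (Nat.mul_le_mul hU hV)
  have hr0 : (0:ℝ) < r := by exact_mod_cast hr1
  have e1 := q_le U.card r hr1 hrU
  have e2 := q_le V.card r hr1 hrV
  have htr : (t:ℝ) ≤ 8 * r := by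
    have : t ≤ 8 * r := by omega
    exact_mod_cast this
  have h5 : (H'.card : ℝ) * t ≤ ((U.card : ℝ) * (2*U.card/r)) * ((V.card:ℝ) * (2*V.card/r)) := by
    refine hcR.trans ?_
    gcongr
  have h6 : (H'.card : ℝ) * t * r^2 ≤ 4 * (U.card:ℝ)^2 * (V.card:ℝ)^2 := by
    calc (H'.card : ℝ) * t * r^2 ≤ ((U.card : ℝ) * (2*U.card/r)) * ((V.card:ℝ) * (2*V.card/r)) * r^2 := by gcongr
      _ = _ := by field_simp; ring
  calc (H'.card : ℝ) * (t:ℝ)^3 = (H'.card : ℝ) * t * (t:ℝ)^2 := by ring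
    _ ≤ (H'.card : ℝ) * t * (8 * r:ℝ)^2 := by gcongr
    _ = 64 * ((H'.card : ℝ) * t * r^2) := by ring
    _ ≤ 64 * (4 * (U.card:ℝ)^2 * (V.card:ℝ)^2) := by gcongr
    _ = _ := by ring

lemma st_cube (U V : Finset ℝ) (H : Finset Aff) (K : ℝ) (hK : 768 * (1 + Real.log U.card) ≤ K) :
    ∑ h ∈ H.filter (fun h => 2 ≤ rich U V h), (rich U V h : ℝ)^3 ≤ K * (U.card:ℝ)^2 * (V.card:ℝ)^2 := by
  have := layer_cake (H.filter (fun h => 2 ≤ rich U V h)) (fun h => rich U V h) U.card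
    (256 * (U.card:ℝ)^2 * (V.card:ℝ)^2) (fun h _ => rich_le_left _ _ _) ?_
  · refine this.trans ?_
    calc _ = (768 * (1 + Real.log U.card)) * ((U.card:ℝ)^2 * (V.card:ℝ)^2) := by ring
      _ ≤ K * ((U.card:ℝ)^2 * (V.card:ℝ)^2) := by gcongr
      _ = _ := by ring
  · intro t ht
    rw [Finset.filter_filter]
    rcases Nat.lt_or_ge t 2 with h | h
    · have : t = 1 := by omega
      subst this
      have h2 := st_basic U V H 2 le_rfl
      have e : H.filter (fun a => 2 ≤ rich U V a ∧ 1 ≤ rich U V a) = H.filter (fun a => 2 ≤ rich U V a) := by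
        apply Finset.filter_congr; intro x _; omega
      rw [e]
      refine le_trans ?_ h2
      push_cast
      gcongr
      norm_num
    · have e : H.filter (fun a => 2 ≤ rich U V a ∧ t ≤ rich U V a) = H.filter (fun a => t ≤ rich U V a) := by
        apply Finset.filter_congr; intro x _; omega
      rw [e]
      exact st_basic U V H t h

section fw
variable {G Ω : Type*} [Group G] [MulAction G Ω]

/-- the action as a map on pairs -/
def act (p : G × Ω) : Ω := p.1 • p.2

/-- Szemeredi-Trotter type hypothesis -/
def STH (G Ω : Type*) [Group G] [MulAction G Ω] (n K : ℝ) : Prop :=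
  ∀ U V : Finset Ω, (U.card:ℝ) ≤ n^6 → (V.card:ℝ) ≤ n^6 → ∀ H : Finset G,
    ∑ h ∈ H.filter (fun h => 2 ≤ rich U V h), (rich U V h : ℝ)^3 ≤ K * (U.card:ℝ)^2 * (V.card:ℝ)^2

lemma rich_swap (R : Finset G) (U V : Finset Ω) :
    ∑ g ∈ R, rich U V g = ∑ x ∈ V, fib (R ×ˢ U) act x := by
  have e1 : ∑ g ∈ R, rich U V g = ((R ×ˢ U).filter (fun p => act p ∈ V)).card := by
    rw [Finset.card_filter, Finset.sum_product]
    apply Finset.sum_congr rfl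
    intro g _
    unfold rich
    rw [Finset.card_filter]
    rfl
  rw [e1]
  rw [Finset.card_eq_sum_card_fiberwise (f := act) (t := V)]
  · apply Finset.sum_congr rfl
    intro x hx
    unfold fib
    rw [Finset.filter_filter]
    congr 1
    apply Finset.filter_congr
    intro p _
    constructor
    · exact fun h => h.2
    · intro h; exact ⟨h ▸ hx, h⟩
  · intro p hp
    simp only [Finset.coe_filter] at hp
    exact hp.2

lemma inc_bound {n K : ℝ} (hST : STH G Ω n K) (R : Finset G) (U V : Finset Ω)
    (hU : (U.card:ℝ) ≤ n^6) (hV : (V.card:ℝ) ≤ n^6) (t : ℝ) (ht : 2 ≤ t) :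
    ∑ g ∈ R, (rich U V g : ℝ) ≤ t * R.card + K * (U.card:ℝ)^2 * (V.card:ℝ)^2 / t^2 := by
  have ht0 : 0 < t := by linarith
  have h1 := hST U V hU hV R
  calc ∑ g ∈ R, (rich U V g : ℝ)
      ≤ ∑ g ∈ R, (t + (if 2 ≤ rich U V g then (rich U V g : ℝ)^3 / t^2 else 0)) := by
        apply Finset.sum_le_sum
        intro g _
        split_ifs with h
        · rcases le_total (rich U V g : ℝ) t with h' | h'
          · have : (0:ℝ) ≤ (rich U V g : ℝ)^3 / t^2 := by positivity
            linarith
          · have : (rich U V g : ℝ) ≤ (rich U V g : ℝ)^3 / t^2 := by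
              rw [le_div_iff₀ (by positivity)]
              have : t^2 ≤ (rich U V g : ℝ)^2 := by gcongr
              calc (rich U V g : ℝ) * t^2 ≤ (rich U V g : ℝ) * (rich U V g : ℝ)^2 := by gcongr
                _ = _ := by ring
            linarith
        · have : rich U V g ≤ 1 := by omega
          have : (rich U V g : ℝ) ≤ 1 := by exact_mod_cast this
          linarith
    _ = t * R.card + (∑ g ∈ R.filter (fun g => 2 ≤ rich U V g), (rich U V g : ℝ)^3) / t^2 := by
        rw [Finset.sum_add_distrib, Finset.sum_const, nsmul_eq_mul, ← Finset.sum_filter, Finset.sum_div]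
        ring
    _ ≤ _ := by gcongr

lemma fib_act_le (L : Finset G) (B : Finset Ω) (x : Ω) : fib (L ×ˢ B) act x ≤ L.card := by
  apply Finset.card_le_card_of_injOn (fun p => p.1)
  · intro p hp
    simp only [Finset.mem_coe, Finset.mem_filter, Finset.mem_product] at hp
    exact hp.1.1
  · rintro ⟨g, u⟩ hp ⟨g', u'⟩ hp' he
    simp only [Finset.mem_coe, Finset.mem_filter, Finset.mem_product] at hp hp' he
    subst he
    have : g • u = g • u' := hp.2.trans hp'.2.symm
    rw [MulAction.injective g this]

lemma popular_card {n K : ℝ} (hn : 1 ≤ n) (hK : 2 ≤ K) (hST : STH G Ω n K)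
    (L : Finset G) (B : Finset Ω) (hL : (L.card:ℝ) ≤ n^4) (hB : (B.card:ℝ) ≤ n^2)
    (t : ℝ) (ht : 0 < t) :
    ((((L ×ˢ B).image act).filter (fun x => t ≤ (fib (L ×ˢ B) act x : ℝ))).card : ℝ) * t^3 ≤ 8 * K * n^12 := by
  set I := (L ×ˢ B).image act
  set X := I.filter (fun x => t ≤ (fib (L ×ˢ B) act x : ℝ)) with hX
  have hn0 : 0 < n := by linarith
  rcases Finset.eq_empty_or_nonempty X with he | ⟨x0, hx0⟩
  · rw [he]; simp; positivity
  have htn : t ≤ n^4 := by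
    refine (Finset.mem_filter.mp hx0).2.trans (le_trans ?_ hL)
    exact_mod_cast fib_act_le L B x0
  have hXpos : (0:ℝ) < X.card := by exact_mod_cast Finset.card_pos.mpr ⟨x0, hx0⟩
  have hXn : (X.card : ℝ) ≤ n^6 := by
    have h1 : X.card ≤ L.card * B.card := by
      rw [← Finset.card_product]
      exact (Finset.card_filter_le _ _).trans Finset.card_image_le
    calc (X.card : ℝ) ≤ L.card * B.card := by exact_mod_cast h1
      _ ≤ n^4 * n^2 := by gcongr
      _ = n^6 := by ring
  have hBn : (B.card : ℝ) ≤ n^6 := hB.trans (by gcongr; norm_num)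
  have hsum : t * X.card ≤ ∑ g ∈ L, (rich B X g : ℝ) := by
    have h1 := rich_swap L B X
    have h2 : (∑ g ∈ L, (rich B X g : ℝ)) = ∑ x ∈ X, (fib (L ×ˢ B) act x : ℝ) := by exact_mod_cast h1
    rw [h2, mul_comm, ← nsmul_eq_mul]
    exact Finset.card_nsmul_le_sum _ _ _ (fun x hx => (Finset.mem_filter.mp hx).2)
  set τ := t * X.card / (2 * n^4) with hτ
  rcases lt_or_ge τ 2 with hlt | hge
  · have h1 : t * X.card < 2 * (2*n^4) := by
      rwa [hτ, div_lt_iff₀ (by positivity)] at hlt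
    calc (X.card:ℝ) * t^3 = (t * X.card) * t^2 := by ring
      _ ≤ (2 * (2*n^4)) * (n^4)^2 := by gcongr
      _ = 4 * n^12 := by ring
      _ ≤ 8 * K * n^12 := by gcongr; linarith
  · have h1 := inc_bound hST L B X hBn hXn τ hge
    have h2 : τ * L.card ≤ t * X.card / 2 := by
      calc τ * L.card ≤ τ * n^4 := by gcongr
        _ = _ := by rw [hτ]; field_simp
    have h3 : K * (B.card:ℝ)^2 * (X.card:ℝ)^2 / τ^2 ≤ 4 * K * n^12 / t^2 := by
      calc K * (B.card:ℝ)^2 * (X.card:ℝ)^2 / τ^2 ≤ K * (n^2)^2 * (X.card:ℝ)^2 / τ^2 := by gcongr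
        _ = _ := by rw [hτ]; field_simp; ring
    have h4 : t * X.card / 2 ≤ 4 * K * n^12 / t^2 := by linarith
    rw [le_div_iff₀ (by positivity)] at h4
    nlinarith

lemma fw1 {n K : ℝ} (hn : 1 ≤ n) (hK : 2 ≤ K) (hST : STH G Ω n K)
    (L : Finset G) (B : Finset Ω) (hL : (L.card:ℝ) ≤ n^4) (hB : (B.card:ℝ) ≤ n^2)
    (hlog : 3 * (1 + Real.log (n^4)) ≤ K) (hE : n^9 / K ≤ (en (L ×ˢ B) act : ℝ)) :
    ∃ X : Finset Ω, (X.card : ℝ) ≤ n^6 ∧ (X.card : ℝ) ≤ K^10 * n^3 ∧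
      n^6 / K^9 ≤ ∑ g ∈ L, (rich B X g : ℝ) := by
  have hn0 : 0 < n := by linarith
  have hK0 : 0 < K := by linarith
  set I := (L ×ˢ B).image act with hI
  set r : Ω → ℕ := fib (L ×ˢ B) act with hr
  have hr1 : ∑ x ∈ I, (r x : ℝ) ≤ n^6 := by
    have h1 : ∑ x ∈ I, r x = L.card * B.card := by
      rw [← Finset.card_product]; exact sum_fib _ _
    calc ∑ x ∈ I, (r x : ℝ) = L.card * B.card := by exact_mod_cast h1
      _ ≤ n^4 * n^2 := by gcongr
      _ = n^6 := by ring
  have hr3 : ∑ x ∈ I, (r x : ℝ)^3 ≤ K^5 * n^12 := by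
    have h1 := layer_cake I r L.card (8 * K * n^12) (fun x _ => fib_act_le L B x) (by
      intro t ht
      have := popular_card hn hK hST L B hL hB (t:ℝ) (by exact_mod_cast ht)
      convert this using 6
      simp [hr])
    have h2 : Real.log L.card ≤ Real.log (n^4) := by
      rcases Nat.eq_zero_or_pos L.card with h | h
      · rw [h]; simp; exact Real.log_nonneg hn
      · exact Real.log_le_log (by exact_mod_cast h) hL
    calc ∑ x ∈ I, (r x : ℝ)^3 ≤ 3 * (8 * K * n^12) * (1 + Real.log L.card) := h1
      _ = (8 * K * n^12) * (3*(1 + Real.log L.card)) := by ring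
      _ ≤ (8 * K * n^12) * K := by gcongr; linarith
      _ = (2^3 * K^2) * n^12 := by ring
      _ ≤ (K^3 * K^2) * n^12 := by gcongr
      _ = _ := by ring
  set t := n^3 / (2*K) with ht
  have ht0 : 0 < t := by positivity
  have hp := popular_card hn hK hST L B hL hB t ht0
  set X := I.filter (fun x => t ≤ (r x : ℝ)) with hX
  refine ⟨X, ?_, ?_, ?_⟩
  · have h1 : X.card ≤ L.card * B.card := by
      rw [← Finset.card_product]
      exact (Finset.card_filter_le _ _).trans Finset.card_image_le
    calc (X.card : ℝ) ≤ L.card * B.card := by exact_mod_cast h1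
      _ ≤ n^4 * n^2 := by gcongr
      _ = n^6 := by ring
  · have h1 : (X.card : ℝ) ≤ 8 * K * n^12 / t^3 := by
      rw [le_div_iff₀ (by positivity)]; exact hp
    calc (X.card : ℝ) ≤ 8 * K * n^12 / t^3 := h1
      _ = 2^6 * K^4 * n^3 := by rw [ht]; field_simp; ring
      _ ≤ K^6 * K^4 * n^3 := by gcongr
      _ = _ := by ring
  · have h2 : (∑ g ∈ L, (rich B X g : ℝ)) = ∑ x ∈ X, (r x : ℝ) := by
      exact_mod_cast rich_swap L B X
    rw [h2]
    have h3 : ∑ x ∈ I, (r x:ℝ)^2 ≤ ∑ x ∈ X, (r x:ℝ)^2 + t * n^6 := by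
      rw [← Finset.sum_filter_add_sum_filter_not I (fun x => t ≤ (r x : ℝ))]
      gcongr
      calc ∑ x ∈ I.filter (fun x => ¬ t ≤ (r x : ℝ)), (r x:ℝ)^2
          ≤ ∑ x ∈ I.filter (fun x => ¬ t ≤ (r x : ℝ)), t * (r x:ℝ) := by
            apply Finset.sum_le_sum
            intro x hx
            have : (r x : ℝ) ≤ t := (not_le.mp (Finset.mem_filter.mp hx).2).le
            rw [sq]; gcongr
        _ ≤ ∑ x ∈ I, t * (r x:ℝ) := by
            apply Finset.sum_le_sum_of_subset_of_nonneg (Finset.filter_subset _ _)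
            intros; positivity
        _ ≤ t * n^6 := by rw [← Finset.mul_sum]; gcongr
    rw [en_eq] at hE
    have h4 : n^9/(2*K) ≤ ∑ x ∈ X, (r x:ℝ)^2 := by
      have : t * n^6 = n^9/(2*K) := by rw [ht]; field_simp
      have e : n^9/K = n^9/(2*K) + n^9/(2*K) := by field_simp; ring
      linarith
    have h5 : ∑ x ∈ X, (r x:ℝ)^2 ≤ K^6*n^3 * ∑ x ∈ X, (r x:ℝ) + n^9/(4*K) := by
      have hX3 : ∑ x ∈ X, (r x:ℝ)^3 ≤ K^5*n^12 := by
        refine le_trans ?_ hr3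
        apply Finset.sum_le_sum_of_subset_of_nonneg (Finset.filter_subset _ _)
        intros; positivity
      calc ∑ x ∈ X, (r x:ℝ)^2 ≤ ∑ x ∈ X, (K^6*n^3 * (r x:ℝ) + (r x:ℝ)^3 / (4*(K^6*n^3))) := by
            apply Finset.sum_le_sum
            intro x _
            set l := K^6*n^3
            have hl : 0 < l := by positivity
            have e : l * (r x:ℝ) + (r x:ℝ)^3 / (4*l) - (r x:ℝ)^2 = (r x:ℝ) * (2*l - r x)^2/(4*l) := by
              field_simp; ring
            have : 0 ≤ (r x:ℝ) * (2*l - r x)^2/(4*l) := by positivity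
            linarith
        _ = K^6*n^3 * ∑ x ∈ X, (r x:ℝ) + (∑ x ∈ X, (r x:ℝ)^3) / (4*(K^6*n^3)) := by
            rw [Finset.sum_add_distrib, Finset.mul_sum, Finset.sum_div]
        _ ≤ K^6*n^3 * ∑ x ∈ X, (r x:ℝ) + (K^5*n^12) / (4*(K^6*n^3)) := by gcongr
        _ = _ := by congr 1; field_simp
    have h6 : n^9/(4*K) ≤ K^6*n^3 * ∑ x ∈ X, (r x:ℝ) := by
      have e : n^9/(2*K) = n^9/(4*K) + n^9/(4*K) := by field_simp; ring
      linarith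
    rw [div_le_iff₀ (by positivity)] at h6 ⊢
    have h7 : n^3 * n^6 ≤ n^3 * ((∑ x ∈ X, (r x:ℝ)) * (2^2 * K^7)) := by nlinarith
    have h8 := le_of_mul_le_mul_left h7 (by positivity)
    refine h8.trans ?_
    have hs : 0 ≤ ∑ x ∈ X, (r x:ℝ) := by positivity
    calc _ ≤ (∑ x ∈ X, (r x:ℝ)) * (K^2 * K^7) := by gcongr
      _ = _ := by ring
end fw

lemma sum_fib_sq_le_en {ι κ : Type*} (s : Finset ι) (f : ι → κ) (X : Finset κ) :
    ∑ x ∈ X, (fib s f x : ℝ)^2 ≤ en s f := by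
  rw [en_eq]
  calc ∑ x ∈ X, (fib s f x : ℝ)^2 = ∑ x ∈ X.filter (fun x => (fib s f x : ℝ)^2 ≠ 0), (fib s f x : ℝ)^2 :=
        (Finset.sum_filter_ne_zero _).symm
    _ ≤ _ := by
        apply Finset.sum_le_sum_of_subset_of_nonneg
        · intro x hx
          have h := (Finset.mem_filter.mp hx).2
          have h1 : fib s f x ≠ 0 := by intro h0; apply h; rw [h0]; simp
          obtain ⟨y, hy⟩ := Finset.card_pos.mp (Nat.pos_of_ne_zero h1)
          rw [Finset.mem_filter] at hy
          exact Finset.mem_image.mpr ⟨y, hy.1, hy.2⟩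
        · intros; positivity

section fw
variable {G Ω : Type*} [Group G] [MulAction G Ω]

/-- left quotient -/
def om (p : G × G) : G := p.1⁻¹ * p.2
/-- right quotient -/
def de (p : G × G) : G := p.2 * p.1⁻¹

lemma en_act_le (L : Finset G) (B : Finset Ω) :
    en (L ×ˢ B) act ≤ ∑ p ∈ L ×ˢ L, rich B B (om p) := by
  unfold en rich
  rw [← Finset.card_sigma]
  apply Finset.card_le_card_of_injOn
    (fun q => (⟨(q.1.1, q.2.1), q.2.2⟩ : (_ : G × G) × Ω))
  · rintro ⟨⟨g1, b1⟩, ⟨g2, b2⟩⟩ hq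
    simp only [Finset.mem_coe, Finset.mem_filter, Finset.mem_product, Finset.mem_sigma] at hq ⊢
    obtain ⟨⟨⟨h1, h2⟩, h3, h4⟩, h5⟩ := hq
    refine ⟨⟨h1, h3⟩, h4, ?_⟩
    have h5' : g1 • b1 = g2 • b2 := h5
    show (g1⁻¹ * g2) • b2 ∈ B
    rw [mul_smul, ← h5', inv_smul_smul]
    exact h2
  · rintro ⟨⟨g1, b1⟩, ⟨g2, b2⟩⟩ hq ⟨⟨g1', b1'⟩, ⟨g2', b2'⟩⟩ hq' he
    simp only [Finset.mem_coe, Finset.mem_filter, Finset.mem_product] at hq hq'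
    simp only [Sigma.mk.injEq, Prod.mk.injEq, heq_eq_eq] at he
    obtain ⟨⟨rfl, rfl⟩, rfl⟩ := he
    have h1 : g1 • b1 = g2 • b2 := hq.2
    have h2 : g1 • b1' = g2 • b2 := hq'.2
    have : b1 = b1' := MulAction.injective g1 (h1.trans h2.symm)
    rw [this]

lemma fw2 {n K : ℝ} (hn : 1 ≤ n) (hK : 2 ≤ K) (hST : STH G Ω n K)
    (L : Finset G) (B X : Finset Ω) (hL : (L.card:ℝ) ≤ n^4) (hB : (B.card:ℝ) ≤ n^2)
    (hnK : K^32 ≤ n)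
    (hX : (X.card : ℝ) ≤ K^10 * n^3)
    (hI : n^6 / K^9 ≤ ∑ g ∈ L, (rich B X g : ℝ)) :
    ∃ L' ⊆ L, (∀ g ∈ L', n^2/K^10 ≤ (rich B X g : ℝ)) ∧
      n^11 / K^94 ≤ (en (L' ×ˢ L') om : ℝ) := by
  have hn0 : 0 < n := by linarith
  have hK0 : 0 < K := by linarith
  have hK1 : 1 ≤ K := by linarith
  set L' := L.filter (fun g => n^2/K^10 ≤ (rich B X g : ℝ)) with hL'
  have hL'L : L' ⊆ L := Finset.filter_subset _ _
  have hL'c : (L'.card : ℝ) ≤ n^4 := le_trans (by exact_mod_cast Finset.card_le_card hL'L) hL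
  refine ⟨L', hL'L, fun g hg => (Finset.mem_filter.mp hg).2, ?_⟩
  have hsumL' : n^6/K^10 ≤ ∑ g ∈ L', (rich B X g : ℝ) := by
    rw [← Finset.sum_filter_add_sum_filter_not L (fun g => n^2/K^10 ≤ (rich B X g : ℝ))] at hI
    have h1 : ∑ g ∈ L.filter (fun g => ¬ n^2/K^10 ≤ (rich B X g : ℝ)), (rich B X g : ℝ) ≤ n^6/K^10 := by
      calc ∑ g ∈ L.filter (fun g => ¬ n^2/K^10 ≤ (rich B X g : ℝ)), (rich B X g : ℝ)
          ≤ (L.filter (fun g => ¬ n^2/K^10 ≤ (rich B X g : ℝ))).card • (n^2/K^10) := by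
            apply Finset.sum_le_card_nsmul
            intro g hg
            exact (not_le.mp (Finset.mem_filter.mp hg).2).le
        _ = ((L.filter (fun g => ¬ n^2/K^10 ≤ (rich B X g : ℝ))).card : ℝ) * (n^2/K^10) := nsmul_eq_mul _ _
        _ ≤ n^4 * (n^2/K^10) := by
            gcongr
            exact le_trans (by exact_mod_cast Finset.card_filter_le _ _) hL
        _ = _ := by ring
    have h2 : 2 * (n^6/K^10) ≤ n^6/K^9 := by
      rw [← mul_div_assoc, div_le_div_iff₀ (by positivity) (by positivity)]
      calc 2 * n^6 * K^9 ≤ K * n^6 * K^9 := by gcongr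
        _ = _ := by ring
    linarith
  have hE' : n^9/K^30 ≤ (en (L' ×ˢ B) act : ℝ) := by
    refine le_trans ?_ (sum_fib_sq_le_en (L' ×ˢ B) act X)
    have h2 : (∑ g ∈ L', (rich B X g : ℝ)) = ∑ x ∈ X, (fib (L' ×ˢ B) act x : ℝ) := by
      exact_mod_cast rich_swap L' B X
    rw [h2] at hsumL'
    have h3 := sq_sum_le_card_mul_sum_sq (s := X) (f := fun x => (fib (L' ×ˢ B) act x : ℝ))
    set Q := ∑ x ∈ X, (fib (L' ×ˢ B) act x : ℝ)^2
    have hQ : 0 ≤ Q := by positivity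
    have h4 : (n^6/K^10)^2 ≤ K^10 * n^3 * Q := by
      calc (n^6/K^10)^2 ≤ (∑ x ∈ X, (fib (L' ×ˢ B) act x : ℝ))^2 := by gcongr
        _ ≤ X.card * Q := h3
        _ ≤ _ := by gcongr
    have h5 : (n^6/K^10)^2 = K^10 * n^3 * (n^9/K^30) := by field_simp
    rw [h5] at h4
    exact le_of_mul_le_mul_left h4 (by positivity)
  set W := (L' ×ˢ L').image om with hW
  set rr : G → ℕ := fib (L' ×ˢ L') om with hrr
  set k : G → ℕ := fun w => rich B B w with hk
  have hsumk : n^9/K^30 ≤ ∑ w ∈ W, (rr w : ℝ) * (k w : ℝ) := by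
    rw [hW, hrr, sum_fib_mul (L' ×ˢ L') om (fun w => (k w : ℝ))]
    refine hE'.trans ?_
    exact_mod_cast en_act_le L' B
  set K0 := n / K^31 with hK0def
  have hK02 : 2 ≤ K0 := by
    rw [hK0def, le_div_iff₀ (by positivity)]
    calc 2 * K^31 ≤ K * K^31 := by gcongr
      _ = K^32 := by ring
      _ ≤ n := hnK
  have hK0pos : 0 < K0 := by linarith
  set W' := W.filter (fun w => K0 ≤ (k w : ℝ)) with hW'
  have hrrsum : ∑ w ∈ W, (rr w : ℝ) ≤ n^8 := by
    have : ∑ w ∈ W, rr w = L'.card * L'.card := by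
      rw [← Finset.card_product]; exact sum_fib _ _
    calc ∑ w ∈ W, (rr w : ℝ) = L'.card * L'.card := by exact_mod_cast this
      _ ≤ n^4 * n^4 := by gcongr
      _ = _ := by ring
  have hW'sum : n^9/K^31 ≤ ∑ w ∈ W', (rr w : ℝ) * (k w : ℝ) := by
    rw [← Finset.sum_filter_add_sum_filter_not W (fun w => K0 ≤ (k w : ℝ))] at hsumk
    have h1 : ∑ w ∈ W.filter (fun w => ¬ K0 ≤ (k w : ℝ)), (rr w : ℝ) * (k w : ℝ) ≤ n^9/K^31 := by
      calc ∑ w ∈ W.filter (fun w => ¬ K0 ≤ (k w : ℝ)), (rr w : ℝ) * (k w : ℝ)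
          ≤ ∑ w ∈ W.filter (fun w => ¬ K0 ≤ (k w : ℝ)), (rr w : ℝ) * K0 := by
            apply Finset.sum_le_sum
            intro w hw
            gcongr
            exact (not_le.mp (Finset.mem_filter.mp hw).2).le
        _ ≤ ∑ w ∈ W, (rr w : ℝ) * K0 := by
            apply Finset.sum_le_sum_of_subset_of_nonneg (Finset.filter_subset _ _)
            intros; positivity
        _ ≤ n^8 * K0 := by rw [← Finset.sum_mul]; gcongr
        _ = _ := by rw [hK0def]; ring
    have h2 : 2 * (n^9/K^31) ≤ n^9/K^30 := by
      rw [← mul_div_assoc, div_le_div_iff₀ (by positivity) (by positivity)]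
      calc 2 * n^9 * K^30 ≤ K * n^9 * K^30 := by gcongr
        _ = _ := by ring
    linarith
  have hBn : (B.card : ℝ) ≤ n^6 := hB.trans (by gcongr; norm_num)
  have hk2 : ∑ w ∈ W', (k w : ℝ)^2 ≤ K^32 * n^7 := by
    have h1 := hST B B hBn hBn W
    calc ∑ w ∈ W', (k w : ℝ)^2 ≤ ∑ w ∈ W', (k w : ℝ)^3 / K0 := by
          apply Finset.sum_le_sum
          intro w hw
          rw [le_div_iff₀ hK0pos]
          have := (Finset.mem_filter.mp hw).2
          calc (k w : ℝ)^2 * K0 ≤ (k w : ℝ)^2 * (k w : ℝ) := by gcongr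
            _ = _ := by ring
      _ = (∑ w ∈ W', (k w : ℝ)^3) / K0 := by rw [Finset.sum_div]
      _ ≤ (K * (B.card:ℝ)^2 * (B.card:ℝ)^2) / K0 := by
          gcongr
          refine le_trans ?_ h1
          apply Finset.sum_le_sum_of_subset_of_nonneg
          · intro w hw
            rw [Finset.mem_filter] at hw ⊢
            refine ⟨hw.1, ?_⟩
            have : (2:ℝ) ≤ (k w : ℝ) := hK02.trans hw.2
            exact_mod_cast this
          · intros; positivity
      _ ≤ (K * (n^2)^2 * (n^2)^2) / K0 := by gcongr
      _ = _ := by rw [hK0def]; field_simp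
  have hCS := Finset.sum_mul_sq_le_sq_mul_sq W' (fun w => (rr w : ℝ)) (fun w => (k w : ℝ))
  have hrr2 : ∑ w ∈ W', (rr w : ℝ)^2 ≤ en (L' ×ˢ L') om := sum_fib_sq_le_en _ _ _
  set Q := (en (L' ×ˢ L') om : ℝ)
  have h4 : (n^9/K^31)^2 ≤ Q * (K^32 * n^7) := by
    calc (n^9/K^31)^2 ≤ (∑ w ∈ W', (rr w : ℝ) * (k w : ℝ))^2 := by gcongr
      _ ≤ _ := hCS
      _ ≤ Q * (K^32*n^7) := by gcongr
  have h5 : (n^9/K^31)^2 = (n^11/K^94) * (K^32 * n^7) := by field_simp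
  rw [h5] at h4
  exact le_of_mul_le_mul_right h4 (by positivity)

/-- common count -/
noncomputable def cc (B X : Finset Ω) (p : G × G) : ℕ :=
  (B.filter (fun b => p.1 • b ∈ X ∧ p.2 • b ∈ X)).card

lemma fw3 {n K : ℝ} (hn : 1 ≤ n) (hK : 2 ≤ K)
    (L L' : Finset G) (B X : Finset Ω) (hB : (B.card:ℝ) ≤ n^2) (hLL : L' ⊆ L)
    (hdeg : ∀ g ∈ L', n^2/K^10 ≤ (rich B X g : ℝ))
    (hen : n^11 / K^94 ≤ (en (L' ×ˢ L') om : ℝ)) :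
    n^13 / K^114 ≤ ∑ p ∈ L ×ˢ L, (cc B X p : ℝ) * (fib (L ×ˢ L) de (de p) : ℝ) := by
  have hn0 : 0 < n := by linarith
  have hK0 : 0 < K := by linarith
  set W := (L' ×ˢ L').image om with hW
  let Q : Ω → Finset (G × G) := fun b => (L' ×ˢ L').filter (fun p => p.1 • b ∈ X)
  have h1 : n^13 / K^114 ≤ ∑ b ∈ B, (en (Q b) om : ℝ) := by
    have h2 : ∀ w ∈ W, (fib (L' ×ˢ L') om w : ℝ)^2 * (n^2/K^20) ≤ ∑ b ∈ B, (fib (Q b) om w : ℝ)^2 := by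
      intro w _
      set P := (L' ×ˢ L').filter (fun p => om p = w) with hP
      have e1 : ∑ b ∈ B, fib (Q b) om w = ∑ p ∈ P, rich B X p.1 := by
        have : ∀ b, fib (Q b) om w = (P.filter (fun p => p.1 • b ∈ X)).card := by
          intro b
          simp only [fib, Q, hP, Finset.filter_filter, and_comm]
        simp only [this, rich]
        simp only [Finset.card_filter]
        rw [Finset.sum_comm]
      have e2 : (fib (L' ×ˢ L') om w : ℝ) * (n^2/K^10) ≤ ∑ b ∈ B, (fib (Q b) om w : ℝ) := by
        have : (∑ b ∈ B, (fib (Q b) om w : ℝ)) = ∑ p ∈ P, (rich B X p.1 : ℝ) := by exact_mod_cast e1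
        rw [this]
        have hPc : fib (L' ×ˢ L') om w = P.card := rfl
        rw [hPc, ← nsmul_eq_mul]
        apply Finset.card_nsmul_le_sum
        intro p hp
        exact hdeg _ (Finset.mem_product.mp (Finset.mem_filter.mp hp).1).1
      have e3 := sq_sum_le_card_mul_sum_sq (s := B) (f := fun b => (fib (Q b) om w : ℝ))
      set Z := ∑ b ∈ B, (fib (Q b) om w : ℝ)^2
      have hZ : 0 ≤ Z := by positivity
      have e4 : ((fib (L' ×ˢ L') om w : ℝ) * (n^2/K^10))^2 ≤ n^2 * Z := by
        calc _ ≤ (∑ b ∈ B, (fib (Q b) om w : ℝ))^2 := by gcongr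
          _ ≤ _ := e3
          _ ≤ n^2 * Z := by gcongr
      have e5 : ((fib (L' ×ˢ L') om w : ℝ) * (n^2/K^10))^2 = n^2 * ((fib (L' ×ˢ L') om w : ℝ)^2 * (n^2/K^20)) := by
        field_simp
      rw [e5] at e4
      exact le_of_mul_le_mul_left e4 (by positivity)
    calc n^13/K^114 = n^11/K^94 * (n^2/K^20) := by field_simp
      _ ≤ (en (L' ×ˢ L') om : ℝ) * (n^2/K^20) := by gcongr
      _ = ∑ w ∈ W, (fib (L' ×ˢ L') om w : ℝ)^2 * (n^2/K^20) := by rw [en_eq, Finset.sum_mul]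
      _ ≤ ∑ w ∈ W, ∑ b ∈ B, (fib (Q b) om w : ℝ)^2 := Finset.sum_le_sum h2
      _ = ∑ b ∈ B, ∑ w ∈ W, (fib (Q b) om w : ℝ)^2 := Finset.sum_comm
      _ ≤ _ := Finset.sum_le_sum (fun b _ => sum_fib_sq_le_en _ _ _)
  refine h1.trans ?_
  have h3 : ∀ b ∈ B, en (Q b) om ≤ ∑ p ∈ (L ×ˢ L).filter (fun p => p.1 • b ∈ X ∧ p.2 • b ∈ X), fib (L ×ˢ L) de (de p) := by
    intro b _
    unfold en fib
    rw [← Finset.card_sigma]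
    apply Finset.card_le_card_of_injOn
      (fun q => (⟨(q.1.1, q.2.1), (q.1.2, q.2.2)⟩ : (_ : G × G) × (G × G)))
    · rintro ⟨⟨g1, g2⟩, ⟨g3, g4⟩⟩ hq
      simp only [Finset.mem_coe, Q, Finset.mem_filter, Finset.mem_product, Finset.mem_sigma] at hq ⊢
      obtain ⟨⟨⟨⟨a1, a2⟩, a3⟩, ⟨a4, a5⟩, a6⟩, a7⟩ := hq
      refine ⟨⟨⟨hLL a1, hLL a4⟩, a3, a6⟩, ⟨hLL a2, hLL a5⟩, ?_⟩
      have a7' : g1⁻¹ * g2 = g3⁻¹ * g4 := a7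
      show g4 * g2⁻¹ = g3 * g1⁻¹
      have : g4 = g3 * (g1⁻¹ * g2) := by rw [a7']; group
      rw [this]; group
    · rintro ⟨⟨g1, g2⟩, ⟨g3, g4⟩⟩ hq ⟨⟨g1', g2'⟩, ⟨g3', g4'⟩⟩ hq' he
      simp only [Sigma.mk.injEq, Prod.mk.injEq, heq_eq_eq] at he
      obtain ⟨⟨rfl, rfl⟩, rfl, rfl⟩ := he
      rfl
  calc ∑ b ∈ B, (en (Q b) om : ℝ)
      ≤ ∑ b ∈ B, ∑ p ∈ (L ×ˢ L).filter (fun p => p.1 • b ∈ X ∧ p.2 • b ∈ X), (fib (L ×ˢ L) de (de p) : ℝ) := by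
        apply Finset.sum_le_sum
        intro b hb
        exact_mod_cast h3 b hb
    _ = ∑ p ∈ L ×ˢ L, (cc B X p : ℝ) * (fib (L ×ˢ L) de (de p) : ℝ) := by
        simp only [Finset.sum_filter]
        rw [Finset.sum_comm]
        apply Finset.sum_congr rfl
        intro p _
        rw [← Finset.sum_filter, Finset.sum_const, nsmul_eq_mul]
        rfl
end fw

section fw
variable {G Ω : Type*} [Group G] [MulAction G Ω]

lemma fib_de_le (L : Finset G) (h : G) : fib (L ×ˢ L) de h ≤ L.card := by
  apply Finset.card_le_card_of_injOn (fun p => p.1)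
  · intro p hp
    simp only [Finset.mem_coe, Finset.mem_filter, Finset.mem_product] at hp
    exact hp.1.1
  · rintro ⟨g, u⟩ hp ⟨g', u'⟩ hp' he
    simp only [Finset.mem_coe, Finset.mem_filter, Finset.mem_product] at hp hp' he
    subst he
    have : u * g⁻¹ = u' * g⁻¹ := hp.2.trans hp'.2.symm
    rw [mul_right_cancel this]

lemma m_bound {n K : ℝ} (hST : STH G Ω n K) (L : Finset G) (B X : Finset Ω)
    (hB : (B.card:ℝ) ≤ n^6) (hX : (X.card:ℝ) ≤ n^6) (h : G) (t : ℝ) (ht : 2 ≤ t) :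
    ∑ p ∈ (L ×ˢ L).filter (fun p => de p = h), (cc B X p : ℝ) ≤
      t * (fib (L ×ˢ L) de h : ℝ) + K * (B.card:ℝ)^2 * (rich X X h : ℝ)^2 / t^2 := by
  set P := (L ×ˢ L).filter (fun p => de p = h) with hP
  have hinj : Set.InjOn (fun p : G × G => p.1) P := by
    rintro ⟨g, u⟩ hp ⟨g', u'⟩ hp' he
    simp only [Finset.mem_coe, hP, Finset.mem_filter, Finset.mem_product] at hp hp' he
    subst he
    have : u * g⁻¹ = u' * g⁻¹ := hp.2.trans hp'.2.symm
    rw [mul_right_cancel this]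
  set R := P.image (fun p => p.1) with hR
  set Xh := X.filter (fun x => h • x ∈ X) with hXh
  have hRc : R.card = fib (L ×ˢ L) de h := Finset.card_image_of_injOn hinj
  have e : ∑ p ∈ P, (cc B X p : ℝ) = ∑ g ∈ R, (rich B Xh g : ℝ) := by
    rw [hR, Finset.sum_image hinj]
    apply Finset.sum_congr rfl
    intro p hp
    have h1 : p.2 * p.1⁻¹ = h := (Finset.mem_filter.mp hp).2
    have h2 : p.2 = h * p.1 := by rw [← h1]; group
    have : cc B X p = rich B Xh p.1 := by
      unfold cc rich
      congr 1
      apply Finset.filter_congr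
      intro b _
      rw [h2, hXh, Finset.mem_filter, mul_smul]
    rw [this]
  rw [e, ← hRc]
  have hXc : (Xh.card : ℝ) ≤ n^6 := le_trans (by exact_mod_cast Finset.card_filter_le _ _) hX
  exact inc_bound hST R B Xh hB hXc t ht

lemma m_triv {n : ℝ} (L : Finset G) (B X : Finset Ω)
    (hB : (B.card:ℝ) ≤ n^2) (h : G) :
    ∑ p ∈ (L ×ˢ L).filter (fun p => de p = h), (cc B X p : ℝ) ≤ n^2 * (fib (L ×ˢ L) de h : ℝ) := by
  rw [mul_comm]
  unfold fib
  rw [← nsmul_eq_mul]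
  apply Finset.sum_le_card_nsmul
  intro p _
  exact le_trans (by exact_mod_cast Finset.card_filter_le _ _) hB

lemma pointwise {n K m ρ k : ℝ} (hn : 1 ≤ n) (hK : 2 ≤ K) (hnK : K^179 < n)
    (hρ1 : 1 ≤ ρ) (hρ : ρ ≤ n^4) (ha : m ≤ n^2 * ρ)
    (hb : m ≤ (n^2/K^119) * ρ + K * (n^2)^2 * k^2 / (n^2/K^119)^2) (hk : 0 ≤ k) :
    m * ρ ≤ (2*n^2/K^119) * ρ^2 + (if 1 < k then n^2 * (n^2/K^694) * (K^179*k/n)^3 else 0)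
      + (if n^4/K^1388 ≤ ρ then n^10 else 0) := by
  have hn0 : 0 < n := by linarith
  have hK0 : 0 < K := by linarith
  have hρ0 : 0 < ρ := by linarith
  by_cases h1 : m ≤ 2*n^2/K^119 * ρ
  · have e1 : m * ρ ≤ (2*n^2/K^119) * ρ^2 := by
      calc m * ρ ≤ (2*n^2/K^119 * ρ) * ρ := by gcongr
        _ = _ := by ring
    have e2 : 0 ≤ (if 1 < k then n^2 * (n^2/K^694) * (K^179*k/n)^3 else 0) := by
      split_ifs
      · positivity
      · exact le_rfl
    have e3 : 0 ≤ (if n^4/K^1388 ≤ ρ then n^10 else 0) := by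
      split_ifs
      · positivity
      · exact le_rfl
    linarith
  · push Not at h1
    have h2 : n^2/K^119 * ρ < K * (n^2)^2 * k^2 / (n^2/K^119)^2 := by
      have : 2*n^2/K^119 * ρ = n^2/K^119 * ρ + n^2/K^119 * ρ := by ring
      linarith
    have h3 : ρ < (K^179*k/n)^2 := by
      have e : K * (n^2)^2 * k^2 / (n^2/K^119)^2 = n^2/K^119 * (K^179*k/n)^2 := by field_simp
      rw [e] at h2
      exact lt_of_mul_lt_mul_left h2 (by positivity)
    have hk1 : 1 < k := by
      by_contra hk1
      push Not at hk1
      have : K^179*k/n ≤ 1 := by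
        rw [div_le_one hn0]
        calc K^179*k ≤ K^179*1 := by gcongr
          _ ≤ n := by linarith
      have : (K^179*k/n)^2 ≤ 1 := pow_le_one₀ (by positivity) this
      linarith
    rw [if_pos hk1]
    have e0 : 0 ≤ (2*n^2/K^119) * ρ^2 := by positivity
    have e00 : 0 ≤ n^2 * (n^2/K^694) * (K^179*k/n)^3 := by positivity
    have e1 : m * ρ ≤ n^2 * ρ^2 := by
      calc m * ρ ≤ (n^2 * ρ) * ρ := by gcongr
        _ = _ := by ring
    split_ifs with h4
    · have : n^2 * ρ^2 ≤ n^10 := by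
        calc n^2 * ρ^2 ≤ n^2 * (n^4)^2 := by gcongr
          _ = _ := by ring
      linarith
    · push Not at h4
      set y := K^179*k/n
      have hy : 0 ≤ y := by positivity
      have s1 : Real.sqrt ρ ≤ n^2/K^694 := by
        rw [Real.sqrt_le_left (by positivity)]
        calc ρ ≤ n^4/K^1388 := h4.le
          _ = _ := by field_simp
      have s2 : Real.sqrt ρ ≤ y := by
        rw [Real.sqrt_le_left hy]; exact h3.le
      have s0 := Real.sqrt_nonneg ρ
      have : ρ^2 ≤ (n^2/K^694) * y^3 := by
        calc ρ^2 = (Real.sqrt ρ * Real.sqrt ρ)^2 := by rw [Real.mul_self_sqrt hρ0.le]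
          _ = Real.sqrt ρ * (Real.sqrt ρ)^3 := by ring
          _ ≤ _ := by gcongr
      have : n^2 * ρ^2 ≤ n^2 * (n^2/K^694) * y^3 := by
        rw [mul_assoc]; gcongr
      linarith

theorem framework {n K : ℝ} (hn : 1 ≤ n) (hK : 2 ≤ K) (hST : STH G Ω n K)
    (L : Finset G) (B : Finset Ω) (hL : (L.card:ℝ) ≤ n^4) (hB : (B.card:ℝ) ≤ n^2)
    (hlog : 3 * (1 + Real.log (n^4)) ≤ K) (hnK : K^6000 ≤ n)
    (H1 : (en (L ×ˢ L) de : ℝ) ≤ K^2 * n^11)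
    (H2 : ((((L ×ˢ L).image de).filter (fun h => n^4/K^1388 ≤ (fib (L ×ˢ L) de h : ℝ))).card : ℝ)
      ≤ K^5557 * n^2) :
    (en (L ×ˢ B) act : ℝ) < n^9 / K := by
  by_contra hE
  push Not at hE
  have hn0 : 0 < n := by linarith
  have hK0 : 0 < K := by linarith
  have hK1 : 1 ≤ K := by linarith
  have hnK' : ∀ i : ℕ, i ≤ 6000 → K^i ≤ n := fun i hi => (pow_le_pow_right₀ hK1 hi).trans hnK
  obtain ⟨X, hX6, hX3, hI⟩ := fw1 hn hK hST L B hL hB hlog hE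
  obtain ⟨L', hLL, hdeg, hen⟩ := fw2 hn hK hST L B X hL hB (hnK' 32 (by norm_num)) hX3 hI
  have hS := fw3 hn hK L L' B X hB hLL hdeg hen
  set HH := (L ×ˢ L).image de with hHH
  set ρ : G → ℝ := fun h => (fib (L ×ˢ L) de h : ℝ) with hρ
  set m : G → ℝ := fun h => ∑ p ∈ (L ×ˢ L).filter (fun p => de p = h), (cc B X p : ℝ) with hm
  have hSeq : ∑ p ∈ L ×ˢ L, (cc B X p : ℝ) * (fib (L ×ˢ L) de (de p) : ℝ) = ∑ h ∈ HH, m h * ρ h := by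
    rw [← Finset.sum_fiberwise_of_maps_to (g := de) (t := HH) (fun p hp => Finset.mem_image_of_mem _ hp)]
    apply Finset.sum_congr rfl
    intro h _
    rw [hm, Finset.sum_mul]
    apply Finset.sum_congr rfl
    intro p hp
    rw [(Finset.mem_filter.mp hp).2]
  rw [hSeq] at hS
  have hBn : (B.card : ℝ) ≤ n^6 := hB.trans (by gcongr; norm_num)
  have ht2 : 2 ≤ n^2/K^119 := by
    rw [le_div_iff₀ (by positivity)]
    calc 2 * K^119 ≤ K * K^119 := by gcongr
      _ = K^120 := by ring
      _ ≤ n := hnK' 120 (by norm_num)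
      _ ≤ n^2 := by nlinarith
  have hk179 : K^179 < n := by
    calc K^179 < K^180 := by
          have : 0 < K^179 := by positivity
          rw [pow_succ]; nlinarith
      _ ≤ n := hnK' 180 (by norm_num)
  have hpt : ∀ h ∈ HH, m h * ρ h ≤ (2*n^2/K^119) * (ρ h)^2
      + (if (1:ℝ) < (rich X X h : ℝ) then n^2 * (n^2/K^694) * (K^179*(rich X X h : ℝ)/n)^3 else 0)
      + (if n^4/K^1388 ≤ ρ h then n^10 else 0) := by
    intro h hh
    apply pointwise hn hK hk179
    · obtain ⟨p, hp, hph⟩ := Finset.mem_image.mp hh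
      have : 0 < fib (L ×ˢ L) de h := Finset.card_pos.mpr ⟨p, Finset.mem_filter.mpr ⟨hp, hph⟩⟩
      have : 1 ≤ fib (L ×ˢ L) de h := this
      show (1:ℝ) ≤ (fib (L ×ˢ L) de h : ℝ)
      exact_mod_cast this
    · refine le_trans ?_ hL
      show (fib (L ×ˢ L) de h : ℝ) ≤ _
      exact_mod_cast fib_de_le L h
    · exact m_triv L B X hB h
    · refine (m_bound hST L B X hBn hX6 h _ ht2).trans ?_
      gcongr
    · positivity
  have hsum := Finset.sum_le_sum hpt
  rw [Finset.sum_add_distrib, Finset.sum_add_distrib] at hsum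
  have b1 : ∑ h ∈ HH, (2*n^2/K^119) * (ρ h)^2 ≤ n^13/K^114/4 := by
    rw [← Finset.mul_sum]
    have : ∑ h ∈ HH, (ρ h)^2 ≤ K^2 * n^11 := by rw [← en_eq (L ×ˢ L) de]; exact H1
    calc (2*n^2/K^119) * ∑ h ∈ HH, (ρ h)^2 ≤ (2*n^2/K^119) * (K^2 * n^11) := by gcongr
      _ = 2 * n^13/K^117 := by field_simp
      _ ≤ _ := by
        rw [div_div, div_le_div_iff₀ (by positivity) (by positivity)]
        calc 2 * n^13 * (K^114*4) = n^13 * (2^3 * K^114) := by ring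
          _ ≤ n^13 * (K^3 * K^114) := by gcongr
          _ = _ := by ring
  have b2 : ∑ h ∈ HH, (if (1:ℝ) < (rich X X h : ℝ) then n^2 * (n^2/K^694) * (K^179*(rich X X h : ℝ)/n)^3 else 0)
      ≤ n^13/K^114/4 := by
    rw [← Finset.sum_filter]
    have e1 : ∀ h : G, n^2 * (n^2/K^694) * (K^179*(rich X X h : ℝ)/n)^3 = (n*K^537/K^694) * (rich X X h : ℝ)^3 := by
      intro h; field_simp
    simp only [e1]
    rw [← Finset.mul_sum]
    have e2 : HH.filter (fun h => (1:ℝ) < (rich X X h : ℝ)) = HH.filter (fun h => 2 ≤ rich X X h) := by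
      apply Finset.filter_congr
      intro h _
      constructor
      · intro hh; have : 1 < rich X X h := by exact_mod_cast hh
        exact this
      · intro hh; have : 1 < rich X X h := hh
        exact_mod_cast this
    rw [e2]
    have e3 := hST X X hX6 hX6 HH
    calc (n*K^537/K^694) * ∑ h ∈ HH.filter (fun h => 2 ≤ rich X X h), (rich X X h : ℝ)^3
        ≤ (n*K^537/K^694) * (K * (X.card:ℝ)^2 * (X.card:ℝ)^2) := by gcongr
      _ ≤ (n*K^537/K^694) * (K * (K^10*n^3)^2 * (K^10*n^3)^2) := by gcongr
      _ = n^13/K^116 := by field_simp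
      _ ≤ _ := by
        rw [div_div, div_le_div_iff₀ (by positivity) (by positivity)]
        calc n^13 * (K^114*4) = n^13 * (2^2 * K^114) := by ring
          _ ≤ n^13 * (K^2 * K^114) := by gcongr
          _ = _ := by ring
  have b3 : ∑ h ∈ HH, (if n^4/K^1388 ≤ ρ h then n^10 else 0) ≤ n^13/K^114/4 := by
    rw [← Finset.sum_filter, Finset.sum_const, nsmul_eq_mul]
    calc _ ≤ (K^5557 * n^2) * n^10 := by gcongr
      _ ≤ _ := by
        rw [div_div, le_div_iff₀ (by positivity)]
        calc (K^5557 * n^2) * n^10 * (K^114*4) = n^12 * (2^2 * K^5671) := by ring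
          _ ≤ n^12 * (K^2 * K^5671) := by gcongr
          _ = n^12 * K^5673 := by ring
          _ ≤ n^12 * n := by gcongr; exact hnK' 5673 (by norm_num)
          _ = _ := by ring
  have hpos : 0 < n^13/K^114 := by positivity
  linarith
end fw

lemma sth_aff {n K : ℝ} (hn : 1 ≤ n) (hK : 768 * (1 + Real.log (n^6)) ≤ K) : STH Aff ℝ n K := by
  intro U V hU _ H
  apply st_cube
  refine le_trans ?_ hK
  have h2 : Real.log U.card ≤ Real.log (n^6) := by
    rcases Nat.eq_zero_or_pos U.card with h | h
    · rw [h]; simp; exact Real.log_nonneg hn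
    · exact Real.log_le_log (by exact_mod_cast h) hU
  linarith

lemma h1_core {n K : ℝ} (hn : 1 ≤ n) (hK : 2 ≤ K) (hST : STH Aff ℝ n K) {ι : Type*}
    (s : Finset ι) (f : ι → Aff) (U : Finset ℝ) (hs : (s.card : ℝ) ≤ n^8) (hU : (U.card : ℝ) ≤ n^2)
    (hf : ∀ h, (fib s f h : ℝ) ≤ n^2 * (rich U U h : ℝ)) :
    (en s f : ℝ) ≤ K^2 * n^11 := by
  have hn0 : 0 < n := by linarith
  have hUn : (U.card : ℝ) ≤ n^6 := hU.trans (by gcongr; norm_num)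
  rw [en_eq]
  have hpt : ∀ h ∈ s.image f, (fib s f h : ℝ)^2 ≤ n^3 * (fib s f h : ℝ) +
      (if 2 ≤ rich U U h then n^3 * (rich U U h : ℝ)^3 else 0) := by
    intro h _
    set ρ := (fib s f h : ℝ)
    have hρ : 0 ≤ ρ := by positivity
    have hρk := hf h
    set k := (rich U U h : ℝ) with hk
    have hk0 : 0 ≤ k := by positivity
    rcases le_or_gt k n with h1 | h1
    · have : ρ^2 ≤ n^3 * ρ := by
        rw [sq]; gcongr
        calc ρ ≤ n^2 * k := hρk
          _ ≤ n^2 * n := by gcongr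
          _ = _ := by ring
      have : 0 ≤ (if 2 ≤ rich U U h then n^3 * k^3 else 0) := by
        split_ifs
        · positivity
        · exact le_rfl
      linarith
    · have h2 : 2 ≤ rich U U h := by
        have : (1:ℝ) < rich U U h := lt_of_le_of_lt hn h1
        have : 1 < rich U U h := by exact_mod_cast this
        exact this
      rw [if_pos h2]
      have : ρ^2 ≤ n^3 * k^3 := by
        calc ρ^2 ≤ (n^2*k)^2 := by gcongr
          _ = n^3 * k^2 * n := by ring
          _ ≤ n^3 * k^2 * k := by gcongr
          _ = _ := by ring
      have : 0 ≤ n^3 * ρ := by positivity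
      linarith
  refine (Finset.sum_le_sum hpt).trans ?_
  rw [Finset.sum_add_distrib, ← Finset.mul_sum, ← Finset.sum_filter, ← Finset.mul_sum]
  have h1 : ∑ h ∈ s.image f, (fib s f h : ℝ) = s.card := by exact_mod_cast sum_fib s f
  rw [h1]
  have h2 := hST U U hUn hUn (s.image f)
  have h3 : K * (U.card:ℝ)^2 * (U.card:ℝ)^2 ≤ K * (n^2)^2 * (n^2)^2 := by gcongr
  calc _ ≤ n^3 * n^8 + n^3 * (K * (n^2)^2 * (n^2)^2) := by
        gcongr; exact h2.trans h3
    _ = (1 + K) * n^11 := by ring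
    _ ≤ K^2 * n^11 := by gcongr; nlinarith

lemma rich_count {n K : ℝ} (hST : STH Aff ℝ n K) (U V : Finset ℝ)
    (hU : (U.card:ℝ) ≤ n^6) (hV : (V.card:ℝ) ≤ n^6) (T : Finset Aff) (x : ℝ) (hx : 2 ≤ x)
    (hT : ∀ h ∈ T, x ≤ (rich U V h : ℝ)) :
    (T.card : ℝ) * x^3 ≤ K * (U.card:ℝ)^2 * (V.card:ℝ)^2 := by
  refine le_trans ?_ (hST U V hU hV T)
  have : T.filter (fun h => 2 ≤ rich U V h) = T := by
    apply Finset.filter_true_of_mem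
    intro h hh
    have : (2:ℝ) ≤ (rich U V h : ℝ) := hx.trans (hT h hh)
    exact_mod_cast this
  rw [this, ← nsmul_eq_mul]
  apply Finset.card_nsmul_le_sum
  intro h hh
  have := hT h hh
  gcongr

/-- nonzero part as units -/
noncomputable def unitsOf (A : Finset ℝ) : Finset ℝˣ :=
  A.preimage (fun u : ℝˣ => (u : ℝ)) (Units.val_injective.injOn)

lemma mem_unitsOf {A : Finset ℝ} {u : ℝˣ} : u ∈ unitsOf A ↔ (u : ℝ) ∈ A := by
  simp [unitsOf]

lemma unitsOf_card (A : Finset ℝ) : (unitsOf A).card ≤ A.card := by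
  apply Finset.card_le_card_of_injOn (fun u : ℝˣ => (u : ℝ))
  · intro u hu; exact mem_unitsOf.mp hu
  · exact Units.val_injective.injOn

lemma card_le_unitsOf (A : Finset ℝ) : A.card ≤ (unitsOf A).card + 1 := by
  have : A ⊆ (unitsOf A).image (fun u : ℝˣ => (u : ℝ)) ∪ {0} := by
    intro x hx
    by_cases h : x = 0
    · simp [h]
    · apply Finset.mem_union_left
      rw [Finset.mem_image]
      exact ⟨Units.mk0 x h, mem_unitsOf.mpr hx, rfl⟩
  refine (Finset.card_le_card this).trans ((Finset.card_union_le _ _).trans ?_)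
  simp only [Finset.card_singleton]
  gcongr
  exact Finset.card_image_le

/-! Problem 2 -/

noncomputable def L2 (A : Finset ℝ) (ε : ℝ) : Finset Aff :=
  (unitsOf A ×ˢ A).image (fun p => (⟨p.1, ε * p.2⟩ : Aff))

lemma L2_card {A : Finset ℝ} {ε n : ℝ} (hA : (A.card : ℝ) ≤ n^2) : ((L2 A ε).card : ℝ) ≤ n^4 := by
  have h1 : (L2 A ε).card ≤ A.card * A.card := by
    refine Finset.card_image_le.trans ?_
    rw [Finset.card_product]
    gcongr
    exact unitsOf_card A
  calc ((L2 A ε).card : ℝ) ≤ A.card * A.card := by exact_mod_cast h1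
    _ ≤ n^2 * n^2 := by gcongr
    _ = _ := by ring

lemma mem_L2 {A : Finset ℝ} {ε : ℝ} {g : Aff} (hg : g ∈ L2 A ε) :
    g.a ∈ unitsOf A ∧ g.b ∈ A.image (fun x => ε * x) := by
  obtain ⟨p, hp, rfl⟩ := Finset.mem_image.mp hg
  rw [Finset.mem_product] at hp
  exact ⟨hp.1, Finset.mem_image_of_mem _ hp.2⟩

lemma fib_L2 (A : Finset ℝ) (ε : ℝ) (h : Aff) :
    fib (L2 A ε ×ˢ L2 A ε) de h ≤
      A.card * rich (A.image (fun x => ε * x)) (A.image (fun x => ε * x)) h := by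
  set D := A.image (fun x => ε * x) with hD
  refine le_trans ?_ (Nat.mul_le_mul_right _ (unitsOf_card A))
  unfold rich
  rw [← Finset.card_product]
  apply Finset.card_le_card_of_injOn (fun p : Aff × Aff => (p.1.a, p.1.b))
  · rintro ⟨g1, g2⟩ hp
    simp only [Finset.mem_coe, Finset.mem_filter, Finset.mem_product] at hp ⊢
    have m1 := mem_L2 hp.1.1
    have m2 := mem_L2 hp.1.2
    refine ⟨m1.1, m1.2, ?_⟩
    have e : h • g1.b = g2.b := by
      rw [← hp.2, Aff.smul_def]
      simp [de]
      ring
    rw [e]; exact m2.2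
  · rintro ⟨g1, g2⟩ hp ⟨g1', g2'⟩ hp' he
    simp only [Finset.mem_coe, Finset.mem_filter, Finset.mem_product] at hp hp'
    simp only [Prod.mk.injEq] at he
    have : g1 = g1' := Aff.ext he.1 he.2
    subst this
    have : g2 * g1⁻¹ = g2' * g1⁻¹ := hp.2.trans hp'.2.symm
    rw [mul_right_cancel this]

theorem prob2 {A : Finset ℝ} {ε n K : ℝ} (hn : 1 ≤ n) (hK : 2 ≤ K) (hA : (A.card : ℝ) ≤ n^2)
    (hlog : 768 * (1 + Real.log (n^6)) ≤ K) (hnK : K^6000 ≤ n) :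
    (en (L2 A ε ×ˢ A) act : ℝ) < n^9 / K := by
  have hn0 : 0 < n := by linarith
  have hK0 : 0 < K := by linarith
  have hK1 : 1 ≤ K := by linarith
  have hST := sth_aff hn hlog
  have hLc := L2_card (ε := ε) hA
  set L := L2 A ε with hL
  set D := A.image (fun x => ε * x) with hD
  have hDc : (D.card : ℝ) ≤ n^2 := le_trans (by exact_mod_cast Finset.card_image_le) hA
  have hDn : (D.card : ℝ) ≤ n^6 := hDc.trans (by gcongr; norm_num)
  have hfib : ∀ h, (fib (L ×ˢ L) de h : ℝ) ≤ n^2 * (rich D D h : ℝ) := by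
    intro h
    calc (fib (L ×ˢ L) de h : ℝ) ≤ A.card * (rich D D h : ℝ) := by exact_mod_cast fib_L2 A ε h
      _ ≤ _ := by gcongr
  have hLL : ((L ×ˢ L).card : ℝ) ≤ n^8 := by
    rw [Finset.card_product]; push_cast
    calc (L.card : ℝ) * L.card ≤ n^4 * n^4 := by gcongr
      _ = _ := by ring
  refine framework hn hK hST L A hLc hA ?_ hnK (h1_core hn hK hST _ _ D hLL hDc hfib) ?_
  · have : Real.log (n^4) ≤ Real.log (n^6) := Real.log_le_log (by positivity) (by gcongr; norm_num)
    have : 0 ≤ Real.log (n^4) := Real.log_nonneg (one_le_pow₀ hn)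
    linarith
  · set T := ((L ×ˢ L).image de).filter (fun h => n^4/K^1388 ≤ (fib (L ×ˢ L) de h : ℝ))
    have hx : 2 ≤ n^2/K^1388 := by
      rw [le_div_iff₀ (by positivity)]
      calc 2 * K^1388 ≤ K * K^1388 := by gcongr
        _ = K^1389 := by ring
        _ ≤ K^6000 := pow_le_pow_right₀ hK1 (by norm_num)
        _ ≤ n := hnK
        _ ≤ n^2 := by nlinarith
    have h1 := rich_count hST D D hDn hDn T (n^2/K^1388) hx (by
      intro h hh
      have h2 := (Finset.mem_filter.mp hh).2.trans (hfib h)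
      have e : n^4/K^1388 = n^2 * (n^2/K^1388) := by ring
      rw [e] at h2
      exact le_of_mul_le_mul_left h2 (by positivity))
    have h2 : (T.card : ℝ) * (n^2/K^1388)^3 ≤ (K^4165 * n^2) * (n^2/K^1388)^3 := by
      calc _ ≤ K * (D.card:ℝ)^2 * (D.card:ℝ)^2 := h1
        _ ≤ K * (n^2)^2 * (n^2)^2 := by gcongr
        _ = _ := by field_simp
    have h3 := le_of_mul_le_mul_right h2 (by positivity)
    refine h3.trans ?_
    gcongr
    norm_num

/-! Problem 1 -/

noncomputable def L1 (A : Finset ℝ) : Finset Aff :=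
  (unitsOf A ×ˢ A).image (fun p => (⟨-p.1, (p.1 : ℝ) * p.2⟩ : Aff))

lemma L1_card {A : Finset ℝ} {n : ℝ} (hA : (A.card : ℝ) ≤ n^2) : ((L1 A).card : ℝ) ≤ n^4 := by
  have h1 : (L1 A).card ≤ A.card * A.card := by
    refine Finset.card_image_le.trans ?_
    rw [Finset.card_product]
    gcongr
    exact unitsOf_card A
  calc ((L1 A).card : ℝ) ≤ A.card * A.card := by exact_mod_cast h1
    _ ≤ n^2 * n^2 := by gcongr
    _ = _ := by ring

lemma mem_L1 {A : Finset ℝ} {g : Aff} (hg : g ∈ L1 A) :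
    -g.a ∈ unitsOf A ∧ g⁻¹ • (0:ℝ) ∈ A := by
  obtain ⟨p, hp, rfl⟩ := Finset.mem_image.mp hg
  rw [Finset.mem_product] at hp
  refine ⟨by simpa using hp.1, ?_⟩
  have : (⟨-p.1, (p.1 : ℝ) * p.2⟩ : Aff)⁻¹ • (0:ℝ) = p.2 := by
    rw [inv_smul_eq_iff, Aff.smul_def]
    simp
  rw [this]; exact hp.2

lemma aff_ext_zero {g g' : Aff} (ha : -g.a = -g'.a) (h0 : g⁻¹ • (0:ℝ) = g'⁻¹ • (0:ℝ)) : g = g' := by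
  have ha' : g.a = g'.a := neg_injective ha
  apply Aff.ext ha'
  simp only [Aff.smul_def, Aff.inv_a, Aff.inv_b, mul_zero, zero_add, ha', neg_inj] at h0
  exact mul_left_cancel₀ (Units.ne_zero _) h0

lemma fib_L1_om (A : Finset ℝ) (w : Aff) :
    fib (L1 A ×ˢ L1 A) om w ≤ A.card * rich A A w := by
  refine le_trans ?_ (Nat.mul_le_mul_right _ (unitsOf_card A))
  unfold rich
  rw [← Finset.card_product]
  apply Finset.card_le_card_of_injOn (fun p : Aff × Aff => (-p.2.a, p.2⁻¹ • (0:ℝ)))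
  · rintro ⟨g1, g2⟩ hp
    simp only [Finset.mem_coe, Finset.mem_filter, Finset.mem_product] at hp ⊢
    have m1 := mem_L1 hp.1.1
    have m2 := mem_L1 hp.1.2
    refine ⟨m2.1, m2.2, ?_⟩
    have e : w • g2⁻¹ • (0:ℝ) = g1⁻¹ • (0:ℝ) := by
      rw [← hp.2, smul_smul]
      simp [om]
    rw [e]; exact m1.2
  · rintro ⟨g1, g2⟩ hp ⟨g1', g2'⟩ hp' he
    simp only [Finset.mem_coe, Finset.mem_filter, Finset.mem_product] at hp hp'
    simp only [Prod.mk.injEq] at he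
    have : g2 = g2' := aff_ext_zero he.1 he.2
    subst this
    have : g1⁻¹ * g2 = g1'⁻¹ * g2 := hp.2.trans hp'.2.symm
    rw [inv_injective (mul_right_cancel this)]

lemma en_de_le_om {G : Type*} [Group G] (L : Finset G) : en (L ×ˢ L) de ≤ en (L ×ˢ L) om := by
  unfold en
  apply Finset.card_le_card_of_injOn (fun q => ((q.1.1, q.2.1), (q.1.2, q.2.2)))
  · rintro ⟨⟨g1, g2⟩, ⟨g3, g4⟩⟩ hq
    simp only [Finset.mem_coe, Finset.mem_filter, Finset.mem_product] at hq ⊢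
    refine ⟨by tauto, ?_⟩
    have h : g2 * g1⁻¹ = g4 * g3⁻¹ := hq.2
    show g1⁻¹ * g3 = g2⁻¹ * g4
    have : g4 = g2 * g1⁻¹ * g3 := by rw [h]; group
    rw [this]; group
  · rintro ⟨⟨g1, g2⟩, ⟨g3, g4⟩⟩ hq ⟨⟨g1', g2'⟩, ⟨g3', g4'⟩⟩ hq' he
    simp only [Prod.mk.injEq] at he ⊢
    tauto

/-- multiplicative richness -/
noncomputable def mrich (U : Finset ℝˣ) (q : ℝˣ) : ℕ := (U.filter (fun a => q * a ∈ U)).card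

lemma fib_L1_mrich (A : Finset ℝ) (h : Aff) :
    fib (L1 A ×ˢ L1 A) de h ≤ mrich (unitsOf A) h.a * A.card := by
  unfold mrich
  rw [← Finset.card_product]
  apply Finset.card_le_card_of_injOn (fun p : Aff × Aff => (-p.1.a, p.1⁻¹ • (0:ℝ)))
  · rintro ⟨g1, g2⟩ hp
    simp only [Finset.mem_coe, Finset.mem_filter, Finset.mem_product] at hp ⊢
    have m1 := mem_L1 hp.1.1
    have m2 := mem_L1 hp.1.2
    refine ⟨⟨m1.1, ?_⟩, m1.2⟩
    have e : h.a * -g1.a = -g2.a := by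
      rw [← hp.2]; simp [de]
    rw [e]; exact m2.1
  · rintro ⟨g1, g2⟩ hp ⟨g1', g2'⟩ hp' he
    simp only [Finset.mem_coe, Finset.mem_filter, Finset.mem_product] at hp hp'
    simp only [Prod.mk.injEq] at he
    have : g1 = g1' := aff_ext_zero he.1 he.2
    subst this
    have : g2 * g1⁻¹ = g2' * g1⁻¹ := hp.2.trans hp'.2.symm
    rw [mul_right_cancel this]

lemma sum_mrich (U Q : Finset ℝˣ) : ∑ q ∈ Q, mrich U q ≤ U.card * U.card := by
  unfold mrich
  rw [← Finset.card_sigma, ← Finset.card_product]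
  apply Finset.card_le_card_of_injOn (fun x => (x.2, x.1 * x.2))
  · rintro ⟨q, a⟩ hx
    simp only [Finset.mem_coe, Finset.mem_sigma, Finset.mem_filter, Finset.mem_product] at hx ⊢
    exact hx.2
  · rintro ⟨q, a⟩ hx ⟨q', a'⟩ hx' he
    simp only [Prod.mk.injEq] at he
    obtain ⟨rfl, h2⟩ := he
    rw [mul_right_cancel h2]

/-- inverses -/
noncomputable def invs (A : Finset ℝ) : Finset ℝ := (unitsOf A).image (fun u => ((u⁻¹ : ℝˣ) : ℝ))

lemma fib_L1_rich (A : Finset ℝ) (h : Aff) (s : ℝˣ) (hs : h.b = s) :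
    fib (L1 A ×ˢ L1 A) de h ≤ ∑ b ∈ A, rich (invs A) A (⟨s, b⟩ : Aff) := by
  unfold rich
  rw [← Finset.card_sigma]
  apply Finset.card_le_card_of_injOn (fun p : Aff × Aff =>
    (⟨p.1⁻¹ • (0:ℝ), (((-p.2.a)⁻¹ : ℝˣ) : ℝ)⟩ : (_ : ℝ) × ℝ))
  · rintro ⟨g1, g2⟩ hp
    simp only [Finset.mem_coe, Finset.mem_filter, Finset.mem_product, Finset.mem_sigma] at hp ⊢
    have m1 := mem_L1 hp.1.1
    have m2 := mem_L1 hp.1.2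
    refine ⟨m1.2, Finset.mem_image.mpr ⟨_, m2.1, rfl⟩, ?_⟩
    have e : (⟨s, g1⁻¹ • (0:ℝ)⟩ : Aff) • (((-g2.a)⁻¹ : ℝˣ) : ℝ) = g2⁻¹ • (0:ℝ) := by
      have h1 : h.b = g2 • (g1⁻¹ • (0:ℝ)) := by
        rw [← hp.2, smul_smul, Aff.smul_def]; simp [de]
      rw [Aff.smul_def]
      simp only
      rw [← hs, h1]
      set y := g1⁻¹ • (0:ℝ)
      simp only [Aff.smul_def, Aff.inv_a, Aff.inv_b]
      have := Units.ne_zero g2.a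
      simp only [Units.val_inv_eq_inv_val, Units.val_neg]
      field_simp
      ring
    rw [e]; exact m2.2
  · rintro ⟨g1, g2⟩ hp ⟨g1', g2'⟩ hp' he
    simp only [Finset.mem_coe, Finset.mem_filter, Finset.mem_product] at hp hp'
    simp only [Sigma.mk.injEq, heq_eq_eq] at he
    have h2 : -g2.a = -g2'.a := inv_injective (Units.ext he.2)
    have e2 : g2.a * g1.a⁻¹ = h.a := by rw [← hp.2]; rfl
    have e2' : g2'.a * g1'.a⁻¹ = h.a := by rw [← hp'.2]; rfl
    have h3 : g1.a = g1'.a := by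
      rw [← e2', neg_injective h2] at e2
      exact inv_injective (mul_left_cancel e2)
    have : g1 = g1' := aff_ext_zero (by rw [h3]) he.1
    subst this
    have : g2 * g1⁻¹ = g2' * g1⁻¹ := hp.2.trans hp'.2.symm
    rw [mul_right_cancel this]

lemma invs_card (A : Finset ℝ) : (invs A).card ≤ A.card :=
  Finset.card_image_le.trans (unitsOf_card A)

theorem prob1 {A B : Finset ℝ} {n K : ℝ} (hn : 1 ≤ n) (hK : 2 ≤ K) (hA : (A.card : ℝ) ≤ n^2)
    (hB : (B.card : ℝ) ≤ n^2)
    (hlog : 768 * (1 + Real.log (n^6)) ≤ K) (hnK : K^6000 ≤ n) :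
    (en (L1 A ×ˢ B) act : ℝ) < n^9 / K := by
  have hn0 : 0 < n := by linarith
  have hK0 : 0 < K := by linarith
  have hK1 : 1 ≤ K := by linarith
  have hST := sth_aff hn hlog
  have hLc := L1_card hA
  set L := L1 A with hL
  have hAn : (A.card : ℝ) ≤ n^6 := hA.trans (by gcongr; norm_num)
  have hfib : ∀ h, (fib (L ×ˢ L) om h : ℝ) ≤ n^2 * (rich A A h : ℝ) := by
    intro h
    calc (fib (L ×ˢ L) om h : ℝ) ≤ A.card * (rich A A h : ℝ) := by exact_mod_cast fib_L1_om A h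
      _ ≤ _ := by gcongr
  have hLL : ((L ×ˢ L).card : ℝ) ≤ n^8 := by
    rw [Finset.card_product]; push_cast
    calc (L.card : ℝ) * L.card ≤ n^4 * n^4 := by gcongr
      _ = _ := by ring
  refine framework hn hK hST L B hLc hB ?_ hnK
    (le_trans (by exact_mod_cast en_de_le_om L) (h1_core hn hK hST _ _ A hLL hA hfib)) ?_
  · have : Real.log (n^4) ≤ Real.log (n^6) := Real.log_le_log (by positivity) (by gcongr; norm_num)
    have : 0 ≤ Real.log (n^4) := Real.log_nonneg (one_le_pow₀ hn)
    linarith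
  · set T := ((L ×ˢ L).image de).filter (fun h => n^4/K^1388 ≤ (fib (L ×ˢ L) de h : ℝ)) with hT
    have hTm : ∀ h ∈ T, n^4/K^1388 ≤ (fib (L ×ˢ L) de h : ℝ) := fun h hh => (Finset.mem_filter.mp hh).2
    -- slopes
    set Q := T.image Aff.a with hQ
    have hQc : (Q.card : ℝ) ≤ n^2 * K^1388 := by
      have h1 : (Q.card : ℝ) * (n^2/K^1388) ≤ ∑ q ∈ Q, (mrich (unitsOf A) q : ℝ) := by
        rw [← nsmul_eq_mul]
        apply Finset.card_nsmul_le_sum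
        intro q hq
        obtain ⟨h, hh, rfl⟩ := Finset.mem_image.mp hq
        have h2 : n^4/K^1388 ≤ (mrich (unitsOf A) h.a : ℝ) * n^2 := by
          calc n^4/K^1388 ≤ (fib (L ×ˢ L) de h : ℝ) := hTm h hh
            _ ≤ (mrich (unitsOf A) h.a : ℝ) * A.card := by exact_mod_cast fib_L1_mrich A h
            _ ≤ _ := by gcongr
        have e : n^4/K^1388 = (n^2/K^1388) * n^2 := by ring
        rw [e] at h2
        exact le_of_mul_le_mul_right h2 (by positivity)
      have h3 : ∑ q ∈ Q, (mrich (unitsOf A) q : ℝ) ≤ n^2 * n^2 := by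
        calc ∑ q ∈ Q, (mrich (unitsOf A) q : ℝ) ≤ ((unitsOf A).card : ℝ) * (unitsOf A).card := by
              exact_mod_cast sum_mrich (unitsOf A) Q
          _ ≤ (A.card : ℝ) * A.card := by
              have : ((unitsOf A).card : ℝ) ≤ A.card := by exact_mod_cast unitsOf_card A
              gcongr
          _ ≤ _ := by gcongr
      have h4 : (Q.card : ℝ) * (n^2/K^1388) ≤ (n^2 * K^1388) * (n^2/K^1388) := by
        refine (h1.trans h3).trans (le_of_eq ?_)
        field_simp
      exact le_of_mul_le_mul_right h4 (by positivity)
    -- intercepts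
    set Su := unitsOf (T.image Aff.b) with hSu
    have hSuc : (Su.card : ℝ) ≤ 8 * K * (K^1388)^3 := by
      set R := (Su ×ˢ A).image (fun p => (⟨p.1, p.2⟩ : Aff)) with hR
      have hinj : Set.InjOn (fun p : ℝˣ × ℝ => (⟨p.1, p.2⟩ : Aff)) (Su ×ˢ A : Finset _) := by
        rintro ⟨a, b⟩ _ ⟨a', b'⟩ _ he
        simp only [Aff.mk.injEq] at he
        rw [he.1, he.2]
      have hRc : (R.card : ℝ) ≤ Su.card * n^2 := by
        rw [hR, Finset.card_image_of_injOn hinj, Finset.card_product]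
        push_cast
        gcongr
      have hinvc : ((invs A).card : ℝ) ≤ n^2 := le_trans (by exact_mod_cast invs_card A) hA
      have hinvn : ((invs A).card : ℝ) ≤ n^6 := hinvc.trans (by gcongr; norm_num)
      have hx : 2 ≤ n^2/(2*K^1388) := by
        rw [le_div_iff₀ (by positivity)]
        calc 2 * (2*K^1388) = 2^2 * K^1388 := by ring
          _ ≤ K^2 * K^1388 := by gcongr
          _ = K^1390 := by ring
          _ ≤ K^6000 := pow_le_pow_right₀ hK1 (by norm_num)
          _ ≤ n := hnK
          _ ≤ n^2 := by nlinarith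
      have h1 := inc_bound hST R (invs A) A hinvn hAn _ hx
      have h2 : (Su.card : ℝ) * (n^4/K^1388) ≤ ∑ g ∈ R, (rich (invs A) A g : ℝ) := by
        rw [hR, Finset.sum_image hinj, Finset.sum_product, ← nsmul_eq_mul]
        apply Finset.card_nsmul_le_sum
        intro s hs
        obtain ⟨h, hh, hhs⟩ := Finset.mem_image.mp (mem_unitsOf.mp hs)
        refine (hTm h hh).trans ?_
        exact_mod_cast fib_L1_rich A h s hhs
      have h3 : n^2/(2*K^1388) * R.card ≤ n^2/(2*K^1388) * (Su.card * n^2) := by gcongr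
      have h4 : K * ((invs A).card:ℝ)^2 * (A.card:ℝ)^2 / (n^2/(2*K^1388))^2
          ≤ K * (n^2)^2 * (n^2)^2 / (n^2/(2*K^1388))^2 := by gcongr
      have e4 : K * (n^2)^2 * (n^2)^2 / (n^2/(2*K^1388))^2 = (n^4/(2*K^1388)) * (8 * K * (K^1388)^3) := by
        field_simp; ring
      have e3 : n^2/(2*K^1388) * (Su.card * n^2) = (n^4/(2*K^1388)) * Su.card := by ring
      have e2 : (Su.card : ℝ) * (n^4/K^1388) = (n^4/(2*K^1388)) * Su.card + (n^4/(2*K^1388)) * Su.card := by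
        field_simp; ring
      have h5 : (n^4/(2*K^1388)) * (Su.card:ℝ) ≤ (n^4/(2*K^1388)) * (8 * K * (K^1388)^3) := by linarith
      exact le_of_mul_le_mul_left h5 (by positivity)
    have hTc : T.card ≤ Q.card * (Su.card + 1) := by
      calc T.card ≤ (Q ×ˢ T.image Aff.b).card := by
            apply Finset.card_le_card_of_injOn (fun h => (h.a, h.b))
            · intro h hh
              simp only [Finset.mem_coe, Finset.mem_product]
              exact ⟨Finset.mem_image_of_mem _ hh, Finset.mem_image_of_mem _ hh⟩
            · intro h _ h' _ he
              simp only [Prod.mk.injEq] at he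
              exact Aff.ext he.1 he.2
        _ = Q.card * (T.image Aff.b).card := Finset.card_product _ _
        _ ≤ _ := by gcongr; exact card_le_unitsOf _
    calc (T.card : ℝ) ≤ Q.card * (Su.card + 1) := by exact_mod_cast hTc
      _ ≤ (n^2 * K^1388) * (8 * K * (K^1388)^3 + 1 * 1) := by gcongr; norm_num
      _ ≤ (n^2 * K^1388) * (8 * K * (K^1388)^3 + K * (K^1388)^3) := by
          gcongr
          exact one_le_pow₀ (one_le_pow₀ hK1)
      _ = 9 * (n^2 * K^5553) := by ring
      _ ≤ 2^4 * (n^2 * K^5553) := by gcongr; norm_num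
      _ ≤ K^4 * (n^2 * K^5553) := by gcongr
      _ = _ := by ring

lemma en_inj {ι ι' κ : Type*} (s : Finset ι) (s' : Finset ι') (f : ι → κ) (f' : ι' → κ) (e : ι → ι')
    (hm : ∀ x ∈ s, e x ∈ s') (hi : Set.InjOn e s) (hf : ∀ x ∈ s, f' (e x) = f x) :
    en s f ≤ en s' f' := by
  unfold en
  apply Finset.card_le_card_of_injOn (fun q => (e q.1, e q.2))
  · rintro ⟨x, y⟩ hq
    simp only [Finset.mem_coe, Finset.mem_filter, Finset.mem_product] at hq ⊢
    exact ⟨⟨hm _ hq.1.1, hm _ hq.1.2⟩, by rw [hf _ hq.1.1, hf _ hq.1.2]; exact hq.2⟩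
  · rintro ⟨x, y⟩ hq ⟨x', y'⟩ hq' he
    simp only [Finset.mem_coe, Finset.mem_filter, Finset.mem_product] at hq hq'
    simp only [Prod.mk.injEq] at he ⊢
    exact ⟨hi hq.1.1 hq'.1.1 he.1, hi hq.1.2 hq'.1.2 he.2⟩

lemma en_split {ι κ : Type*} (s : Finset ι) (f : ι → κ) (P : ι → Prop) :
    (en s f : ℝ) ≤ 2 * (en (s.filter P) f : ℝ) + 2 * (en (s.filter (fun x => ¬ P x)) f : ℝ) := by
  rw [en_eq s f]
  have h : ∀ k, fib s f k = fib (s.filter P) f k + fib (s.filter (fun x => ¬ P x)) f k := by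
    intro k
    unfold fib
    rw [← Finset.card_filter_add_card_filter_not (s := s.filter (fun x => f x = k)) P]
    simp only [Finset.filter_filter, and_comm]
  calc ∑ k ∈ s.image f, (fib s f k : ℝ)^2
      ≤ ∑ k ∈ s.image f, (2 * (fib (s.filter P) f k : ℝ)^2 + 2 * (fib (s.filter (fun x => ¬ P x)) f k : ℝ)^2) := by
        apply Finset.sum_le_sum
        intro k _
        rw [h k]
        push_cast
        nlinarith [sq_nonneg ((fib (s.filter P) f k : ℝ) - (fib (s.filter (fun x => ¬ P x)) f k : ℝ))]
    _ ≤ _ := by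
        rw [Finset.sum_add_distrib, ← Finset.mul_sum, ← Finset.mul_sum]
        gcongr <;> exact sum_fib_sq_le_en _ _ _

lemma en_le_sq {ι κ : Type*} (s : Finset ι) (f : ι → κ) : en s f ≤ s.card * s.card := by
  unfold en
  rw [← Finset.card_product]
  exact Finset.card_filter_le _ _

/-- triples -/
noncomputable def tri (A : Finset ℝ) : Finset (ℝ × ℝ × ℝ) := A ×ˢ A ×ˢ A

lemma tri0_card (A : Finset ℝ) : ((tri A).filter (fun x => x.1 = 0)).card ≤ A.card * A.card := by
  rw [← Finset.card_product]
  apply Finset.card_le_card_of_injOn (fun x => x.2)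
  · rintro ⟨a, b, d⟩ hx
    simp only [Finset.mem_coe, Finset.mem_filter, tri, Finset.mem_product] at hx ⊢
    tauto
  · rintro ⟨a, b, d⟩ hx ⟨a', b', d'⟩ hx' he
    simp only [Finset.mem_coe, Finset.mem_filter, tri, Finset.mem_product] at hx hx'
    simp only [Prod.mk.injEq] at he ⊢
    exact ⟨hx.2.trans hx'.2.symm, he⟩

/-- unit from a real -/
noncomputable def mkU (a : ℝ) : ℝˣ := if h : a ≠ 0 then Units.mk0 a h else 1

lemma mkU_val {a : ℝ} (h : a ≠ 0) : ((mkU a : ℝˣ) : ℝ) = a := by simp [mkU, h]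

lemma tri1_e1 (A : Finset ℝ) (ε : ℝ) (hε : ε ≠ 0) :
    en ((tri A).filter (fun x => ¬ x.1 = 0)) (fun x => x.1 * (x.2.1 + ε * x.2.2)) ≤
      en (L1 A ×ˢ A.image (fun x => -ε * x)) act := by
  apply en_inj _ _ _ _ (fun x => ((⟨-mkU x.1, (mkU x.1 : ℝ) * x.2.1⟩ : Aff), -ε * x.2.2))
  · rintro ⟨a, b, d⟩ hx
    simp only [Finset.mem_filter, tri, Finset.mem_product] at hx ⊢
    refine ⟨Finset.mem_image.mpr ⟨(mkU a, b), ?_, rfl⟩, Finset.mem_image_of_mem _ hx.1.2.2⟩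
    rw [Finset.mem_product]
    exact ⟨mem_unitsOf.mpr (by rw [mkU_val hx.2]; exact hx.1.1), hx.1.2.1⟩
  · rintro ⟨a, b, d⟩ hx ⟨a', b', d'⟩ hx' he
    simp only [Finset.mem_coe, Finset.mem_filter] at hx hx'
    simp only [Prod.mk.injEq, Aff.mk.injEq, neg_inj, neg_mul] at he ⊢
    obtain ⟨⟨h1, h2⟩, h3⟩ := he
    have ha : a = a' := by rw [← mkU_val hx.2, ← mkU_val hx'.2, h1]
    rw [h1] at h2
    exact ⟨ha, mul_left_cancel₀ (Units.ne_zero _) h2, mul_left_cancel₀ hε h3⟩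
  · rintro ⟨a, b, d⟩ hx
    simp only [Finset.mem_filter] at hx
    simp only [act, Aff.smul_def, Units.val_neg, mkU_val hx.2]
    ring

lemma tri1_e2 (A : Finset ℝ) (ε : ℝ) (hε : ε ≠ 0) :
    en ((tri A).filter (fun x => ¬ x.1 = 0)) (fun x => x.1 * x.2.1 + ε * x.2.2) ≤
      en (L2 A ε ×ˢ A) act := by
  apply en_inj _ _ _ _ (fun x => ((⟨mkU x.1, ε * x.2.2⟩ : Aff), x.2.1))
  · rintro ⟨a, b, d⟩ hx
    simp only [Finset.mem_filter, tri, Finset.mem_product] at hx ⊢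
    refine ⟨Finset.mem_image.mpr ⟨(mkU a, d), ?_, rfl⟩, hx.1.2.1⟩
    rw [Finset.mem_product]
    exact ⟨mem_unitsOf.mpr (by rw [mkU_val hx.2]; exact hx.1.1), hx.1.2.2⟩
  · rintro ⟨a, b, d⟩ hx ⟨a', b', d'⟩ hx' he
    simp only [Finset.mem_coe, Finset.mem_filter] at hx hx'
    simp only [Prod.mk.injEq, Aff.mk.injEq] at he ⊢
    obtain ⟨⟨h1, h2⟩, h3⟩ := he
    have ha : a = a' := by rw [← mkU_val hx.2, ← mkU_val hx'.2, h1]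
    exact ⟨ha, h3, mul_left_cancel₀ hε h2⟩
  · rintro ⟨a, b, d⟩ hx
    simp only [Finset.mem_filter] at hx
    simp only [act, Aff.smul_def, mkU_val hx.2]

lemma exists_N0 (c : ℝ) (hc : 0 < c) : ∃ N0 : ℝ, 1 ≤ N0 ∧ ∀ x ≥ N0, 2 ≤ x^c ∧
    768 * (1 + 3 * Real.log x) ≤ x^c := by
  have h1 := (isLittleO_log_rpow_atTop hc).bound (show (0:ℝ) < 1/4608 by norm_num)
  have h2 := (tendsto_rpow_atTop hc).eventually_ge_atTop 1536
  have h3 := (h1.and h2).and (Filter.eventually_ge_atTop (1:ℝ))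
  obtain ⟨N0, hN0⟩ := Filter.eventually_atTop.mp h3
  refine ⟨max N0 1, le_max_right _ _, fun x hx => ?_⟩
  obtain ⟨⟨a1, a2⟩, a3⟩ := hN0 x (le_trans (le_max_left _ _) hx)
  refine ⟨by linarith, ?_⟩
  rw [Real.norm_eq_abs, Real.norm_eq_abs, abs_of_nonneg (by linarith : (0:ℝ) ≤ x^c)] at a1
  have := le_abs_self (Real.log x)
  linarith

lemma combine {A : Finset ℝ} {f : ℝ × ℝ × ℝ → ℝ} {c N0 : ℝ} (hc : 0 < c) (hc1 : c ≤ 1/2) (hN0 : 1 ≤ N0)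
    (h : N0 ≤ (A.card : ℝ) → (en ((tri A).filter (fun x => ¬ x.1 = 0)) f : ℝ) ≤ (A.card:ℝ)^((9:ℝ)/2 - c)) :
    (en (tri A) f : ℝ) ≤ (4 + N0^6) * (A.card:ℝ)^((9:ℝ)/2 - c) := by
  set N := (A.card : ℝ) with hN
  have hNn : 0 ≤ N := by positivity
  rcases Nat.eq_zero_or_pos A.card with h0 | hpos
  · have : en (tri A) f = 0 := by
      have := en_le_sq (tri A) f
      simp only [tri, Finset.card_product, h0] at this
      simpa [tri] using this
    rw [this]
    push_cast
    positivity
  have hN1 : 1 ≤ N := by rw [hN]; exact_mod_cast hpos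
  have hp1 : 1 ≤ N^((9:ℝ)/2 - c) := Real.one_le_rpow hN1 (by linarith)
  rcases le_or_gt N0 N with hge | hlt
  · have h1 := h hge
    have h2 := en_split (tri A) f (fun x => x.1 = 0)
    have h3 : (en ((tri A).filter (fun x => x.1 = 0)) f : ℝ) ≤ N^((9:ℝ)/2 - c) := by
      have e1 : en ((tri A).filter (fun x => x.1 = 0)) f ≤ (A.card * A.card) * (A.card * A.card) :=
        (en_le_sq _ _).trans (Nat.mul_le_mul (tri0_card A) (tri0_card A))
      calc (en ((tri A).filter (fun x => x.1 = 0)) f : ℝ) ≤ (N * N) * (N*N) := by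
            rw [hN]; exact_mod_cast e1
        _ = N^(4:ℝ) := by
            rw [show (4:ℝ) = ((4:ℕ):ℝ) by norm_num, Real.rpow_natCast]; ring
        _ ≤ _ := Real.rpow_le_rpow_of_exponent_le hN1 (by linarith)
    have h4 : (en (tri A) f : ℝ) ≤ 4 * N^((9:ℝ)/2 - c) := by
      convert_to (en (tri A) f : ℝ) ≤ 2 * N^((9:ℝ)/2 - c) + 2 * N^((9:ℝ)/2 - c)
      · ring
      · refine h2.trans ?_
        gcongr
    have : 0 ≤ N0^6 * N^((9:ℝ)/2 - c) := by positivity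
    linarith
  · have e1 := en_le_sq (tri A) f
    simp only [tri, Finset.card_product] at e1
    have e2 : (en (tri A) f : ℝ) ≤ N^6 := by
      have : (en (tri A) f : ℝ) ≤ (N * (N*N)) * (N * (N*N)) := by rw [hN]; exact_mod_cast e1
      refine this.trans (le_of_eq (by ring))
    calc (en (tri A) f : ℝ) ≤ N^6 * 1 := by linarith
      _ ≤ N0^6 * N^((9:ℝ)/2 - c) := by gcongr
      _ ≤ _ := by nlinarith

lemma params {N c N0 : ℝ} (hc : c = 1/20000) (hN0 : 1 ≤ N0) (hN : N0 ≤ N)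
    (hx : ∀ x ≥ N0, 2 ≤ x^c ∧ 768 * (1 + 3 * Real.log x) ≤ x^c) :
    1 ≤ Real.sqrt N ∧ 2 ≤ N^c ∧ N ≤ (Real.sqrt N)^2 ∧
    768 * (1 + Real.log ((Real.sqrt N)^6)) ≤ N^c ∧ (N^c)^6000 ≤ Real.sqrt N ∧
    (Real.sqrt N)^9 / N^c = N^((9:ℝ)/2 - c) := by
  have hN1 : 1 ≤ N := hN0.trans hN
  have hNp : 0 < N := by linarith
  have hsq : (Real.sqrt N)^2 = N := Real.sq_sqrt hNp.le
  obtain ⟨a1, a2⟩ := hx N hN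
  refine ⟨Real.one_le_sqrt.mpr hN1, a1, hsq.ge, ?_, ?_, ?_⟩
  · have : (Real.sqrt N)^6 = N^3 := by rw [← hsq]; simp only [Real.sqrt_sq_eq_abs, abs_of_nonneg (Real.sqrt_nonneg N)]; ring
    rw [this, Real.log_pow]
    exact_mod_cast a2
  · rw [← Real.rpow_natCast, ← Real.rpow_mul hNp.le, Real.sqrt_eq_rpow]
    apply Real.rpow_le_rpow_of_exponent_le hN1
    rw [hc]; norm_num
  · rw [Real.sqrt_eq_rpow, ← Real.rpow_natCast, ← Real.rpow_mul hNp.le, ← Real.rpow_sub hNp]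
    congr 1
    norm_num

lemma ncard_le_en (A : Finset ℝ) (f : ℝ × ℝ × ℝ → ℝ) (S : Set (ℝ × ℝ × ℝ × ℝ × ℝ × ℝ))
    (hS : ∀ x ∈ S, x.1 ∈ A ∧ x.2.1 ∈ A ∧ x.2.2.1 ∈ A ∧ x.2.2.2.1 ∈ A ∧ x.2.2.2.2.1 ∈ A ∧ x.2.2.2.2.2 ∈ A ∧
      f (x.1, x.2.1, x.2.2.1) = f (x.2.2.2.1, x.2.2.2.2.1, x.2.2.2.2.2)) :
    S.ncard ≤ en (tri A) f := by
  unfold en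
  rw [← Set.ncard_coe_finset]
  apply Set.ncard_le_ncard_of_injOn (fun x => ((x.1, x.2.1, x.2.2.1), (x.2.2.2.1, x.2.2.2.2.1, x.2.2.2.2.2)))
  · intro x hx
    have := hS x hx
    simp only [Finset.mem_coe, Finset.mem_filter, Finset.mem_product, tri]
    tauto
  · rintro ⟨a, b, c, d, e, f⟩ _ ⟨a', b', c', d', e', f'⟩ _ he
    simp only [Prod.mk.injEq] at he ⊢
    tauto


end Helpers

/-- **Theorem 1.10** (energy of `A(A±A)` and `AA±A`): there are absolute constants
`c > 0` and `C` such that for every finite `A ⊆ ℝ` and each sign `ε ∈ {1, -1}`: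
`#{(a,b,d,a',b',d') ∈ A⁶ : a(b+εd) = a'(b'+εd')} ≤ C|A|^{9/2−c}` and
`#{(a,b,d,a',b',d') ∈ A⁶ : ab+εd = a'b'+εd'} ≤ C|A|^{9/2−c}`. -/
theorem energy_A_mul_A_add_A :
    ∃ c C : ℝ, 0 < c ∧ 0 < C ∧
      ∀ A : Finset ℝ, ∀ ε : ℝ, (ε = 1 ∨ ε = -1) →
        (Set.ncard {x : ℝ × ℝ × ℝ × ℝ × ℝ × ℝ |
            x.1 ∈ A ∧ x.2.1 ∈ A ∧ x.2.2.1 ∈ A ∧ x.2.2.2.1 ∈ A ∧ x.2.2.2.2.1 ∈ A ∧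
            x.2.2.2.2.2 ∈ A ∧
            x.1 * (x.2.1 + ε * x.2.2.1) = x.2.2.2.1 * (x.2.2.2.2.1 + ε * x.2.2.2.2.2)} : ℝ)
          ≤ C * (A.card : ℝ) ^ ((9 : ℝ) / 2 - c) ∧
        (Set.ncard {x : ℝ × ℝ × ℝ × ℝ × ℝ × ℝ |
            x.1 ∈ A ∧ x.2.1 ∈ A ∧ x.2.2.1 ∈ A ∧ x.2.2.2.1 ∈ A ∧ x.2.2.2.2.1 ∈ A ∧
            x.2.2.2.2.2 ∈ A ∧
            x.1 * x.2.1 + ε * x.2.2.1 = x.2.2.2.1 * x.2.2.2.2.1 + ε * x.2.2.2.2.2} : ℝ)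
          ≤ C * (A.card : ℝ) ^ ((9 : ℝ) / 2 - c) := by
  obtain ⟨N0, hN0, hx⟩ := exists_N0 (1/20000) (by norm_num)
  refine ⟨1/20000, 4 + N0^6, by norm_num, by positivity, ?_⟩
  intro A ε hε
  have hε0 : ε ≠ 0 := by rcases hε with h | h <;> rw [h] <;> norm_num
  constructor
  · refine (Nat.cast_le.mpr (ncard_le_en A (fun x => x.1*(x.2.1+ε*x.2.2)) _ (fun x hx => hx))).trans
      (combine (by norm_num) (by norm_num) hN0 (fun h => ?_))
    obtain ⟨h1, h2, h3, h4, h5, h6⟩ := params rfl hN0 h hx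
    rw [← h6]
    refine (Nat.cast_le.mpr (tri1_e1 A ε hε0)).trans (prob1 h1 h2 h3 ?_ h4 h5).le
    exact (Nat.cast_le.mpr Finset.card_image_le).trans h3
  · refine (Nat.cast_le.mpr (ncard_le_en A (fun x => x.1*x.2.1+ε*x.2.2) _ (fun x hx => hx))).trans
      (combine (by norm_num) (by norm_num) hN0 (fun h => ?_))
    obtain ⟨h1, h2, h3, h4, h5, h6⟩ := params rfl hN0 h hx
    rw [← h6]
    exact (Nat.cast_le.mpr (tri1_e2 A ε hε0)).trans (prob2 h1 h2 h3 h4 h5).le
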